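/- arXiv:1208.1075 — 9 statements merged into one kernel-verified Lean document; each statement's English description precedes it below -/
import Mathlib

section
/- Let τ, τ′ ∈ S_k, let 1 ≤ i, j ≤ k, and let χ be one of the three trivial bijections on permutations (reverse, complement, or inverse). If χ(τ) = τ′ and χ(red(τ∖τ_i)) = red(τ′∖τ′_j), then χ maps S_n(τ̂_(i)) bijectively onto S_n(τ̂′_(j)); in particular |S_n(τ̂_(i))| = |S_n(τ̂′_(j))| for all n. -/
/-- `g` is an occurrence of the pattern `τ` in `π`: the indices `g a` are increasing and the
subsequence `π (g 0), …, π (g k)` is order-isomorphic to (i.e. has reduction) `τ`. -/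
def IsOcc {k n : ℕ} (τ : Equiv.Perm (Fin k)) (π : Equiv.Perm (Fin n)) (g : Fin k → Fin n) : Prop :=
  StrictMono g ∧ ∀ a b : Fin k, τ a < τ b ↔ π (g a) < π (g b)

/-- `π` avoids the hatted pattern `τ̂_(i)` (the pattern `τ ∈ S_{k+1}` with its `i`-th entry
marked): every `k`-element subsequence of `π` whose reduction is `red(τ∖τ_i)` (which is encoded
by the order-isomorphism condition with `τ ∘ i.succAbove`) can be extended, by adjoining one
further entry of `π` at some position, to a `(k+1)`-element subsequence with reduction `τ`. -/
def AvoidsHat {k n : ℕ} (τ : Equiv.Perm (Fin (k + 1))) (i : Fin (k + 1))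
    (π : Equiv.Perm (Fin n)) : Prop :=
  ∀ g : Fin k → Fin n, StrictMono g →
    (∀ a b : Fin k, τ (i.succAbove a) < τ (i.succAbove b) ↔ π (g a) < π (g b)) →
    ∃ h : Fin (k + 1) → Fin n, IsOcc τ π h ∧ Set.range g ⊆ Set.range h

/-- the `a`-th value of the reduction of `q`: the number of entries of `q` smaller than `q a`. -/
def redCount {k m : ℕ} (q : Fin k → Fin m) (a : Fin k) : Fin k :=
  ⟨(Finset.univ.filter fun b => q b < q a).card, by
    have hsub : (Finset.univ.filter fun b => q b < q a) ⊆ Finset.univ.erase a := by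
      intro b hb
      rw [Finset.mem_filter] at hb
      exact Finset.mem_erase.mpr ⟨fun h => absurd hb.2 (by rw [h]; exact lt_irrefl _),
        Finset.mem_univ b⟩
    calc (Finset.univ.filter fun b => q b < q a).card
        ≤ (Finset.univ.erase a).card := Finset.card_le_card hsub
      _ < Finset.univ.card := Finset.card_erase_lt_of_mem (Finset.mem_univ a)
      _ = k := by simp⟩

theorem redCount_injective {k m : ℕ} {q : Fin k → Fin m} (hq : Function.Injective q) :
    Function.Injective (redCount q) := by
  intro a b hab
  by_contra hne
  have key : ∀ x y : Fin k, q x < q y →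
      (Finset.univ.filter fun c => q c < q x).card
        < (Finset.univ.filter fun c => q c < q y).card := by
    intro x y hxy
    apply Finset.card_lt_card
    constructor
    · intro c hc
      rw [Finset.mem_filter] at hc ⊢
      exact ⟨Finset.mem_univ c, lt_trans hc.2 hxy⟩
    · intro hsub
      have hx : x ∈ Finset.univ.filter fun c => q c < q y := by
        rw [Finset.mem_filter]; exact ⟨Finset.mem_univ x, hxy⟩
      have := hsub hx
      rw [Finset.mem_filter] at this
      exact lt_irrefl _ this.2
  have hval : ((redCount q a : Fin k) : ℕ) = ((redCount q b : Fin k) : ℕ) := by rw [hab]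
  rcases lt_or_gt_of_ne (fun h : q a = q b => hne (hq h)) with h | h
  · exact absurd hval (Nat.ne_of_lt (key a b h))
  · exact absurd hval.symm (Nat.ne_of_lt (key b a h))

/-- The reduction `red q` of an injective sequence `q` of distinct values, as a permutation:
the `a`-th entry of `q` is replaced by its rank among the entries of `q` (0-indexed). -/
noncomputable def red {k m : ℕ} (q : Fin k → Fin m) (hq : Function.Injective q) :
    Equiv.Perm (Fin k) :=
  Equiv.ofBijective (redCount q) (Finite.injective_iff_bijective.mp (redCount_injective hq))

/-- The reverse of the permutation `π = π_1⋯π_m`, namely `π_m⋯π_1`. -/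
def reverseP {m : ℕ} (π : Equiv.Perm (Fin m)) : Equiv.Perm (Fin m) := Fin.revPerm.trans π

/-- The complement of the permutation `π`, replacing each entry `π_i` by `m + 1 − π_i`
(0-indexed: by `m - 1 - π_i`). -/
def complementP {m : ℕ} (π : Equiv.Perm (Fin m)) : Equiv.Perm (Fin m) := π.trans Fin.revPerm

theorem red_lt_iff {k m : ℕ} (q : Fin k → Fin m) (hq : Function.Injective q) (a b : Fin k) :
    red q hq a < red q hq b ↔ q a < q b := by
  have key : ∀ x y : Fin k, q x < q y → red q hq x < red q hq y := by
    intro x y hxy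
    change (Finset.univ.filter fun c => q c < q x).card
        < (Finset.univ.filter fun c => q c < q y).card
    apply Finset.card_lt_card
    constructor
    · intro c hc
      rw [Finset.mem_filter] at hc ⊢
      exact ⟨Finset.mem_univ c, lt_trans hc.2 hxy⟩
    · intro hsub
      have hx : x ∈ Finset.univ.filter fun c => q c < q y := by
        rw [Finset.mem_filter]; exact ⟨Finset.mem_univ x, hxy⟩
      have := hsub hx
      rw [Finset.mem_filter] at this
      exact lt_irrefl _ this.2
  refine ⟨fun h => ?_, key a b⟩
  rcases lt_trichotomy (q a) (q b) with h1 | h1 | h1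
  · exact h1
  · rw [hq h1] at h
    exact absurd h (lt_irrefl _)
  · exact absurd h (lt_asymm (key b a h1))

theorem avoidsHat_iff {k n : ℕ} (τ : Equiv.Perm (Fin (k + 1))) (i : Fin (k + 1))
    (π : Equiv.Perm (Fin n)) :
    AvoidsHat τ i π ↔ ∀ g : Fin k → Fin n,
      IsOcc (red (fun a => τ (i.succAbove a))
        (τ.injective.comp Fin.succAbove_right_injective)) π g →
      ∃ h : Fin (k + 1) → Fin n, IsOcc τ π h ∧ Set.range g ⊆ Set.range h := by
  simp only [AvoidsHat, IsOcc, red_lt_iff, and_imp]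

/-- A map on permutations that transports occurrences of patterns. -/
def Transports (χ : ∀ m : ℕ, Equiv.Perm (Fin m) → Equiv.Perm (Fin m)) : Prop :=
  (∀ m (π : Equiv.Perm (Fin m)), χ m (χ m π) = π) ∧
  ∀ n, ∃ φ : Equiv.Perm (Fin n) → Fin n → Fin n, (∀ π x, φ (χ n π) (φ π x) = x) ∧
    ∀ (k : ℕ) (σ : Equiv.Perm (Fin k)) (π : Equiv.Perm (Fin n)) (g : Fin k → Fin n),
      IsOcc σ π g → ∃ g', IsOcc (χ k σ) (χ n π) g' ∧ Set.range g' = φ π '' Set.range g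

theorem transports_reverse : Transports (fun _ π => reverseP π) := by
  refine ⟨fun m π => by ext x; simp [reverseP], fun n => ⟨fun _ x => x.rev, fun π x => by simp, ?_⟩⟩
  rintro k σ π g ⟨h1, h2⟩
  refine ⟨fun a => (g a.rev).rev, ⟨fun a b hab => ?_, fun a b => ?_⟩, ?_⟩
  · exact Fin.rev_lt_rev.mpr (h1 (Fin.rev_lt_rev.mpr hab))
  · simpa [reverseP] using h2 a.rev b.rev
  · ext x
    constructor
    · rintro ⟨a, rfl⟩
      exact ⟨_, ⟨a.rev, rfl⟩, rfl⟩
    · rintro ⟨_, ⟨a, rfl⟩, rfl⟩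
      exact ⟨a.rev, by simp⟩

theorem transports_complement : Transports (fun _ π => complementP π) := by
  refine ⟨fun m π => by ext x; simp [complementP], fun n => ⟨fun _ x => x, fun π x => rfl, ?_⟩⟩
  rintro k σ π g ⟨h1, h2⟩
  refine ⟨g, ⟨h1, fun a b => ?_⟩, by simp⟩
  simpa [complementP] using h2 b a

theorem transports_inverse : Transports (fun _ π => π⁻¹) := by
  refine ⟨fun m π => by simp, fun n => ⟨fun π x => π x, fun π x => by simp, ?_⟩⟩
  rintro k σ π g ⟨h1, h2⟩
  refine ⟨fun a => π (g (σ⁻¹ a)), ⟨fun a b hab => ?_, fun a b => ?_⟩, ?_⟩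
  · exact (h2 _ _).mp (by simpa using hab)
  · simpa using h1.lt_iff_lt.symm
  · ext x
    constructor
    · rintro ⟨a, rfl⟩
      exact ⟨_, ⟨σ⁻¹ a, rfl⟩, rfl⟩
    · rintro ⟨_, ⟨a, rfl⟩, rfl⟩
      exact ⟨σ a, by simp⟩

theorem Transports.avoids {χ : ∀ m : ℕ, Equiv.Perm (Fin m) → Equiv.Perm (Fin m)}
    (hχ : Transports χ) {k l n : ℕ} (τ : Equiv.Perm (Fin l)) (σ : Equiv.Perm (Fin k))
    (π : Equiv.Perm (Fin n))
    (H : ∀ g : Fin k → Fin n, IsOcc σ π g →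
      ∃ h : Fin l → Fin n, IsOcc τ π h ∧ Set.range g ⊆ Set.range h) :
    ∀ g : Fin k → Fin n, IsOcc (χ k σ) (χ n π) g →
      ∃ h : Fin l → Fin n, IsOcc (χ l τ) (χ n π) h ∧ Set.range g ⊆ Set.range h := by
  obtain ⟨hinv, hT⟩ := hχ
  obtain ⟨φ, hφ, hocc⟩ := hT n
  intro g hg
  obtain ⟨g', hg', hr⟩ := hocc _ _ _ _ hg
  rw [hinv, hinv] at hg'
  obtain ⟨h, hh, hsub⟩ := H g' hg'
  obtain ⟨h', hh', hr'⟩ := hocc _ _ _ _ hh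
  refine ⟨h', hh', ?_⟩
  rw [hr']
  intro x hx
  refine ⟨φ (χ n π) x, hsub (hr ▸ ⟨x, hx, rfl⟩), ?_⟩
  have := hφ (χ n π) x
  rwa [hinv] at this

/-- Lemma `hat2`. Let `χ` be one of the three trivial bijections on
permutations (reverse, complement, inverse), acting on permutations of every length. If
`χ(τ) = τ'` and `χ(red(τ∖τ_i)) = red(τ'∖τ'_j)`, then `χ` maps `S_n(τ̂_(i))` bijectively onto
`S_n(τ̂'_(j))`; in particular `|S_n(τ̂_(i))| = |S_n(τ̂'_(j))|` for all `n`. -/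
theorem stmt1 {k : ℕ} (χ : ∀ m : ℕ, Equiv.Perm (Fin m) → Equiv.Perm (Fin m))
    (hχ : (∀ m (π : Equiv.Perm (Fin m)), χ m π = reverseP π) ∨
          (∀ m (π : Equiv.Perm (Fin m)), χ m π = complementP π) ∨
          (∀ m (π : Equiv.Perm (Fin m)), χ m π = π⁻¹))
    (τ τ' : Equiv.Perm (Fin (k + 1))) (i j : Fin (k + 1))
    (hτ : χ (k + 1) τ = τ')
    (hred : χ k (red (fun a => τ (i.succAbove a)) (τ.injective.comp Fin.succAbove_right_injective))
      = red (fun a => τ' (j.succAbove a)) (τ'.injective.comp Fin.succAbove_right_injective))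
    (n : ℕ) :
    Set.BijOn (χ n) {π : Equiv.Perm (Fin n) | AvoidsHat τ i π}
      {π : Equiv.Perm (Fin n) | AvoidsHat τ' j π} ∧
    Nat.card {π : Equiv.Perm (Fin n) | AvoidsHat τ i π}
      = Nat.card {π : Equiv.Perm (Fin n) | AvoidsHat τ' j π} := by
  have hT : Transports χ := by
    rcases hχ with h | h | h
    · have : χ = fun _ π => reverseP π := by funext m π; exact h m π
      rw [this]; exact transports_reverse
    · have : χ = fun _ π => complementP π := by funext m π; exact h m π
      rw [this]; exact transports_complement
    · have : χ = fun _ π => π⁻¹ := by funext m π; exact h m π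
      rw [this]; exact transports_inverse
  have hB : Set.BijOn (χ n) {π : Equiv.Perm (Fin n) | AvoidsHat τ i π}
      {π : Equiv.Perm (Fin n) | AvoidsHat τ' j π} := by
    refine ⟨fun π hπ => ?_, fun π _ ρ _ h => ?_, fun π hπ => ⟨χ n π, ?_, hT.1 n π⟩⟩
    · rw [Set.mem_ofPred_eq, avoidsHat_iff] at hπ ⊢
      rw [← hred, ← hτ]
      exact hT.avoids _ _ _ hπ
    · rw [← hT.1 n π, h, hT.1]
    · rw [Set.mem_ofPred_eq, avoidsHat_iff] at hπ ⊢
      rw [← hred] at hπ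
      have := hT.avoids _ _ _ hπ
      rw [hT.1, ← hτ, hT.1] at this
      exact this
  exact ⟨hB, Nat.card_congr hB.equiv⟩
end

section
/- Let τ ∈ S_k with k ≥ 2 and let 1 ≤ i ≤ k. Then S_n(τ̂_(i)) = S_n(τ̄_(i)) for all n = 1, 2, … if and only if τ_i is different from each of the four values τ_{i−1}−1, τ_{i−1}+1, τ_{i+1}−1, τ_{i+1}+1 (conditions involving a nonexistent neighbor τ_0 or τ_{k+1} being vacuously satisfied). -/
/-- `π` avoids the barred pattern `τ̄_(i)`: every `k`-element subsequence of `π` whose reduction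
is `red(τ∖τ_i)` can be extended to a `(k+1)`-element subsequence with reduction `τ` by adjoining
an entry of `π` at the place of the marked entry (the other `k` entries staying in place). -/
def AvoidsBar {k n : ℕ} (τ : Equiv.Perm (Fin (k + 1))) (i : Fin (k + 1))
    (π : Equiv.Perm (Fin n)) : Prop :=
  ∀ g : Fin k → Fin n, StrictMono g →
    (∀ a b : Fin k, τ (i.succAbove a) < τ (i.succAbove b) ↔ π (g a) < π (g b)) →
    ∃ h : Fin (k + 1) → Fin n, IsOcc τ π h ∧ ∀ a : Fin k, h (i.succAbove a) = g a

theorem val_eq_sum {m : ℕ} (τ : Equiv.Perm (Fin m)) (x : Fin m) :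
    (τ x : ℕ) = ∑ c, if τ c < τ x then 1 else 0 := by
  rw [Equiv.sum_comp τ (fun c => if c < τ x then 1 else 0), Finset.sum_boole]
  have : Finset.univ.filter (fun c => c < τ x) = Finset.Iio (τ x) := by ext; simp
  rw [this]; simp

theorem val_eq_succAbove {k : ℕ} (τ : Equiv.Perm (Fin (k + 1))) (i : Fin (k + 1)) (x : Fin (k + 1)) :
    (τ x : ℕ) = (if τ i < τ x then 1 else 0) +
      ∑ b, if τ (i.succAbove b) < τ x then 1 else 0 := by
  rw [val_eq_sum, Fin.sum_univ_succAbove _ i]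

theorem strictMono_succAbove {k : ℕ} (f : Fin k → Fin (k + 1)) (hf : StrictMono f) :
    ∃ j : Fin (k + 1), f = j.succAbove := by
  have hns : ¬ Function.Surjective f := by
    intro h
    have := Fintype.card_le_of_surjective f h
    simp at this
  simp only [Function.Surjective, not_forall, not_exists] at hns
  obtain ⟨j, hj⟩ := hns
  have : ∀ a, ∃ b, j.succAbove b = f a := fun a => Fin.exists_succAbove_eq (hj a)
  choose e he using this
  have hem : StrictMono e := by
    intro a b hab
    have := hf hab
    rw [← he a, ← he b] at this
    exact (Fin.strictMono_succAbove j).lt_iff_lt.1 this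
  have hid : e = id := (StrictMono.range_inj hem strictMono_id).1 (by
    rw [(Finite.injective_iff_surjective.1 hem.injective).range_eq]; simp)
  refine ⟨j, ?_⟩
  funext a
  rw [← he a, hid]; rfl

theorem red_eq_adj {k : ℕ} (τ : Equiv.Perm (Fin (k + 1))) (i j : Fin (k + 1)) (hij : i ≠ j)
    (h : ∀ a b : Fin k, τ (i.succAbove a) < τ (i.succAbove b) ↔
      τ (j.succAbove a) < τ (j.succAbove b)) :
    ∃ i' : Fin (k + 1), ((i' : ℕ) + 1 = (i : ℕ) ∨ (i : ℕ) + 1 = (i' : ℕ)) ∧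
      ((τ i' : ℕ) = (τ i : ℕ) + 1 ∨ (τ i : ℕ) = (τ i' : ℕ) + 1) := by
  have key : ∃ a : Fin k, j.succAbove a = i ∧
      (((i.succAbove a : Fin (k+1)) : ℕ) + 1 = i ∨ (i : ℕ) + 1 = (i.succAbove a : Fin (k+1))) := by
    obtain ⟨a, ha⟩ := Fin.exists_succAbove_eq hij
    refine ⟨a, ha, ?_⟩
    have ha' := congrArg Fin.val ha
    have hne : (i : ℕ) ≠ j := fun h => hij (Fin.ext h)
    simp only [Fin.succAbove, Fin.lt_def, Fin.val_castSucc] at ha' ⊢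
    split_ifs at ha' ⊢ <;> simp at ha' ⊢ <;> omega
  obtain ⟨a, ha, hadj⟩ := key
  refine ⟨i.succAbove a, hadj, ?_⟩
  have h1 := val_eq_succAbove τ i (i.succAbove a)
  have h2 := val_eq_succAbove τ j (j.succAbove a)
  have h3 : (∑ b, if τ (i.succAbove b) < τ (i.succAbove a) then 1 else 0) =
      ∑ b, if τ (j.succAbove b) < τ (j.succAbove a) then 1 else 0 :=
    Finset.sum_congr rfl fun b _ => by simp only [h b a]
  rw [h3] at h1
  rw [ha] at h1 h2
  have hne : (τ i : ℕ) ≠ τ (i.succAbove a) := fun h =>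
    Fin.succAbove_ne i a (τ.injective (Fin.ext h)).symm
  simp only [Fin.lt_def] at h1 h2
  split_ifs at h1 h2 <;> omega

theorem adj_red_eq {k : ℕ} (τ : Equiv.Perm (Fin (k + 1))) (i i' : Fin (k + 1))
    (hadj : (i' : ℕ) + 1 = (i : ℕ) ∨ (i : ℕ) + 1 = (i' : ℕ))
    (hv : (τ i' : ℕ) = (τ i : ℕ) + 1 ∨ (τ i : ℕ) = (τ i' : ℕ) + 1) (a b : Fin k) :
    τ (i.succAbove a) < τ (i.succAbove b) ↔ τ (i'.succAbove a) < τ (i'.succAbove b) := by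
  have key : ∀ a : Fin k, (i.succAbove a = i' ∧ i'.succAbove a = i) ∨
      (i.succAbove a = i'.succAbove a ∧ (τ (i.succAbove a) : ℕ) ≠ τ i ∧
        (τ (i.succAbove a) : ℕ) ≠ τ i') := by
    intro a
    by_cases hc : i.succAbove a = i'.succAbove a
    · refine Or.inr ⟨hc, fun h => ?_, fun h => ?_⟩
      · exact Fin.succAbove_ne i a (τ.injective (Fin.ext h))
      · rw [hc] at h
        exact Fin.succAbove_ne i' a (τ.injective (Fin.ext h))
    · left
      simp only [Fin.ext_iff, Fin.succAbove, Fin.lt_def, Fin.val_castSucc] at hc ⊢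
      split_ifs at hc ⊢ <;> simp at hc ⊢ <;> omega
  rcases key a with ⟨h1, h2⟩ | ⟨h1, h2, h3⟩ <;> rcases key b with ⟨h4, h5⟩ | ⟨h4, h5, h6⟩
  · rw [h1, h2, h4, h5]; simp
  · rw [← h4, h1, h2]; simp only [Fin.lt_def]; omega
  · rw [← h1, h4, h5]; simp only [Fin.lt_def]; omega
  · rw [h1, h4]

/-- Proposition `equ`. For a pattern `τ` of length `k + 1 ≥ 2` with marked
index `i`: `S_n(τ̂_(i)) = S_n(τ̄_(i))` for all `n = 1, 2, …` if and only if the marked entry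
`τ_i` differs from each of `τ_{i−1} − 1`, `τ_{i−1} + 1`, `τ_{i+1} − 1`, `τ_{i+1} + 1`
(the conditions being vacuous when the neighbour `i'` of `i` does not exist; here `i'` ranges
over the neighbouring positions of `i`, i.e. those with `i' + 1 = i` or `i + 1 = i'`). -/
theorem stmt3 {k : ℕ} (hk : 1 ≤ k) (τ : Equiv.Perm (Fin (k + 1))) (i : Fin (k + 1)) :
    (∀ n : ℕ, 1 ≤ n →
        {π : Equiv.Perm (Fin n) | AvoidsHat τ i π}
          = {π : Equiv.Perm (Fin n) | AvoidsBar τ i π}) ↔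
    (∀ i' : Fin (k + 1), ((i' : ℕ) + 1 = (i : ℕ) ∨ (i : ℕ) + 1 = (i' : ℕ)) →
      (τ i' : ℕ) ≠ (τ i : ℕ) + 1 ∧ (τ i : ℕ) ≠ (τ i' : ℕ) + 1) := by
  constructor
  · intro H i' hadj
    by_contra hcon
    have hv : (τ i' : ℕ) = (τ i : ℕ) + 1 ∨ (τ i : ℕ) = (τ i' : ℕ) + 1 := by omega
    have hhat : AvoidsHat τ i τ := fun g _ _ =>
      ⟨id, ⟨strictMono_id, fun _ _ => Iff.rfl⟩, by simp⟩
    have hbar : AvoidsBar τ i τ := by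
      have := H (k + 1) (by omega)
      have h2 : τ ∈ {π : Equiv.Perm (Fin (k + 1)) | AvoidsHat τ i π} := hhat
      rw [this] at h2
      exact h2
    obtain ⟨h, ⟨hm, -⟩, hh⟩ := hbar i'.succAbove (Fin.strictMono_succAbove i')
      (adj_red_eq τ i i' hadj hv)
    have hid : h = id := (StrictMono.range_inj hm strictMono_id).1 (by
      rw [(Finite.injective_iff_surjective.1 hm.injective).range_eq]; simp)
    have hne : i' ≠ i := by intro h; rw [h] at hadj; omega
    obtain ⟨a, ha⟩ := Fin.exists_succAbove_eq hne
    have := hh a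
    rw [hid, id, ha] at this
    exact Fin.succAbove_ne i' a this.symm
  · intro H n _
    ext π
    simp only [Set.mem_ofPred_eq]
    constructor
    · intro hhat g hg hocc
      obtain ⟨h, ⟨hm, ho⟩, hr⟩ := hhat g hg hocc
      have : ∀ a, ∃ c, h c = g a := fun a => hr ⟨a, rfl⟩
      choose f hf using this
      have hfm : StrictMono f := by
        intro a b hab
        have := hg hab
        rw [← hf a, ← hf b] at this
        exact hm.lt_iff_lt.1 this
      obtain ⟨j, rfl⟩ := strictMono_succAbove f hfm
      by_cases hij : i = j
      · subst hij
        exact ⟨h, ⟨hm, ho⟩, hf⟩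
      · exfalso
        obtain ⟨i', hadj, hv⟩ := red_eq_adj τ i j hij (fun a b => by
          rw [hocc a b, ho, hf, hf])
        have := H i' hadj
        omega
    · intro hbar g hg hocc
      obtain ⟨h, ho, hh⟩ := hbar g hg hocc
      refine ⟨h, ho, ?_⟩
      rintro _ ⟨a, rfl⟩
      exact ⟨_, hh a⟩
end

section
/- Let π = π_1⋯π_n ∈ S_n(132) and let D = φ(π) be its image under the standard bijection φ. For each i let h_i be the number of entries of π that occur after π_i and are greater than π_i. Then reading the entry π_i produces a peak of D (i.e., the i-th down-step of D is immediately preceded by an up-step) if and only if π_i is a left-to-right minimum of π, and in that case the height of this peak is h_i + 1. -/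
/-- `π` avoids the pattern 132: no subsequence `π_a π_b π_c` (`a < b < c`) satisfies
`π_a < π_c < π_b`. -/
def Avoids132 {n : ℕ} (π : Equiv.Perm (Fin n)) : Prop :=
  ¬ ∃ a b c : Fin n, a < b ∧ b < c ∧ π a < π c ∧ π c < π b

/-- `h_i`: the number of entries of `π` occurring after `π_i` and greater than `π_i`. -/
def hstat {n : ℕ} (π : Equiv.Perm (Fin n)) (i : Fin n) : ℕ :=
  (Finset.univ.filter fun j => i < j ∧ π i < π j).card

/-- The height of the path `φ(π)` just before the `i`-th entry is read
(`h_{i-1}`, and `0` for `i = 0`). -/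
def prevH {n : ℕ} (π : Equiv.Perm (Fin n)) (i : Fin n) : ℕ :=
  if _h : (i : ℕ) = 0 then 0
  else hstat π ⟨(i : ℕ) - 1, lt_of_le_of_lt (Nat.sub_le _ _) i.isLt⟩

/-- The standard bijection `φ` from `S_n(132)` to Dyck `n`-paths, as a word over
`{u, d}` (`true` = up-step, `false` = down-step): reading `π` from left to right, when `π_i` is
read, append up-steps until the path reaches height `h_i + 1`, then append one down-step. -/
def phi {n : ℕ} (π : Equiv.Perm (Fin n)) : List Bool :=
  (List.ofFn fun i : Fin n =>
    List.replicate (hstat π i + 1 - prevH π i) true ++ [false]).flatten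

/-- `π_i` is a left-to-right minimum of `π`. -/
def IsLTRMin {n : ℕ} (π : Equiv.Perm (Fin n)) (i : Fin n) : Prop :=
  ∀ j : Fin n, j < i → π i < π j

/-- The position (0-indexed) in the word `w` of its `i`-th down-step (`i` counted from `0`). -/
def nthDown (w : List Bool) (i : ℕ) : ℕ := (w.findIdxs fun b => !b).getD i 0

theorem nthDown_split (A B : List Bool) (k : ℕ) :
    nthDown (A ++ (List.replicate k true ++ false :: B)) (A.count false) = A.length + k := by
  have h1 : ∀ k s, (List.replicate k true).findIdxs (fun b => !b) s = [] := by
    intro k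
    induction k with
    | zero => simp
    | succ k ih => intro s; simp [List.replicate_succ, List.findIdxs_cons, ih]
  have h2 : A.count false = (A.findIdxs fun b => !b).length := by
    rw [List.length_findIdxs, List.count]
    congr 1
    funext b; cases b <;> rfl
  unfold nthDown
  rw [List.findIdxs_append, h2, List.findIdxs_append, h1, List.findIdxs_cons]
  simp

section
variable {n : ℕ} (π : Equiv.Perm (Fin n))

theorem prevH_of_pos (i j : Fin n) (hj : (j : ℕ) + 1 = i) : prevH π i = hstat π j := by
  unfold prevH
  rw [dif_neg (by omega)]
  congr 1
  ext
  simp; omega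

theorem prevH_asc (hπ : Avoids132 π) (i j : Fin n) (hj : (j : ℕ) + 1 = i) (h : π j < π i) :
    hstat π j = hstat π i + 1 := by
  unfold hstat
  have : (Finset.univ.filter fun a => j < a ∧ π j < π a)
      = insert i (Finset.univ.filter fun a => i < a ∧ π i < π a) := by
    ext a
    simp only [Finset.mem_filter, Finset.mem_univ, true_and, Finset.mem_insert]
    constructor
    · rintro ⟨h1, h2⟩
      by_cases hai : a = i
      · exact Or.inl hai
      · right
        have h3 : i < a := by
          have : (a : ℕ) ≠ i := fun h => hai (Fin.ext h)
          rw [Fin.lt_def] at *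
          omega
        refine ⟨h3, ?_⟩
        by_contra h4
        have h5 : π a ≠ π i := fun h => hai (π.injective h)
        exact hπ ⟨j, i, a, by rw [Fin.lt_def]; omega, h3, h2, lt_of_le_of_ne (not_lt.mp h4) h5⟩
    · rintro (rfl | ⟨h1, h2⟩)
      · exact ⟨by rw [Fin.lt_def]; omega, h⟩
      · exact ⟨by rw [Fin.lt_def] at *; omega, h.trans h2⟩
  rw [this, Finset.card_insert_of_notMem (by simp)]

theorem prevH_desc (i j : Fin n) (hj : (j : ℕ) + 1 = i) (h : π i < π j) :
    hstat π j ≤ hstat π i := by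
  unfold hstat
  apply Finset.card_le_card
  intro a
  simp only [Finset.mem_filter, Finset.mem_univ, true_and]
  rintro ⟨h1, h2⟩
  refine ⟨?_, h.trans h2⟩
  have : (a : ℕ) ≠ i := by
    intro h'
    have : a = i := Fin.ext h'
    subst this
    exact absurd h2 (not_lt.mpr h.le)
  rw [Fin.lt_def] at *
  omega

theorem prevH_le (hπ : Avoids132 π) (i : Fin n) : prevH π i ≤ hstat π i + 1 := by
  by_cases h0 : (i : ℕ) = 0
  · simp [prevH, h0]
  · obtain ⟨j, hj⟩ : ∃ j : Fin n, (j : ℕ) + 1 = i := ⟨⟨i - 1, by omega⟩, by simp; omega⟩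
    rw [prevH_of_pos π i j hj]
    rcases lt_trichotomy (π j) (π i) with h | h | h
    · exact (prevH_asc π hπ i j hj h).le
    · have := π.injective h
      subst this
      omega
    · have := prevH_desc π i j hj h
      omega

theorem ltr_iff (hπ : Avoids132 π) (i : Fin n) :
    0 < hstat π i + 1 - prevH π i ↔ IsLTRMin π i := by
  by_cases h0 : (i : ℕ) = 0
  · have : IsLTRMin π i := by
      intro j hj
      rw [Fin.lt_def] at hj
      omega
    simp [prevH, h0, this]
  · obtain ⟨j, hj⟩ : ∃ j : Fin n, (j : ℕ) + 1 = i := ⟨⟨i - 1, by omega⟩, by simp; omega⟩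
    have hji : j < i := by rw [Fin.lt_def]; omega
    rw [prevH_of_pos π i j hj]
    rcases lt_trichotomy (π j) (π i) with h | h | h
    · rw [prevH_asc π hπ i j hj h]
      simp only [tsub_self, lt_self_iff_false, false_iff]
      intro hm
      exact absurd (hm j hji) (not_lt.mpr h.le)
    · exact absurd (π.injective h) hji.ne
    · have := prevH_desc π i j hj h
      refine ⟨fun _ => ?_, fun _ => by omega⟩
      intro a ha
      by_contra hc
      have h1 : π a ≠ π i := fun h => ha.ne (π.injective h)
      have h2 : a ≠ j := by
        rintro rfl
        exact hc h
      refine hπ ⟨a, j, i, ?_, hji, lt_of_le_of_ne (not_lt.mp hc) h1, h⟩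
      have : (a : ℕ) ≠ j := fun h => h2 (Fin.ext h)
      rw [Fin.lt_def] at *
      omega

/-- The blocks of the path. -/
def blocks : List (List Bool) :=
  List.ofFn fun i : Fin n => List.replicate (hstat π i + 1 - prevH π i) true ++ [false]

theorem take_blocks_succ (m : ℕ) (hm : m < n) :
    ((blocks π).take (m + 1)).flatten = ((blocks π).take m).flatten ++
      (List.replicate (hstat π ⟨m, hm⟩ + 1 - prevH π ⟨m, hm⟩) true ++ [false]) := by
  rw [List.take_add_one, List.flatten_append]
  simp [blocks, hm]

theorem initial_facts (hπ : Avoids132 π) (m : ℕ) (hm : m < n) :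
    (((blocks π).take m).flatten.count false = m) ∧
    (((blocks π).take m).flatten.count true = m + prevH π ⟨m, hm⟩) ∧
    (((blocks π).take m).flatten = [] ∨ ∃ Q, ((blocks π).take m).flatten = Q ++ [false]) := by
  induction m with
  | zero => simp [prevH]
  | succ m ih =>
    obtain ⟨h1, h2, -⟩ := ih (by omega)
    have h3 := prevH_le π hπ ⟨m, by omega⟩
    rw [take_blocks_succ π m (by omega), prevH_of_pos π ⟨m + 1, hm⟩ ⟨m, by omega⟩ rfl]
    refine ⟨?_, ?_, Or.inr ⟨_, (List.append_assoc _ _ _).symm⟩⟩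
    · simp [h1, List.count_replicate]
    · simp [h2]
      omega

theorem phi_split (i : Fin n) : ∃ B, phi π = ((blocks π).take i).flatten ++
    (List.replicate (hstat π i + 1 - prevH π i) true ++ false :: B) := by
  refine ⟨((blocks π).drop (i + 1)).flatten, ?_⟩
  have : phi π = ((blocks π).take (i + 1)).flatten ++ ((blocks π).drop (i + 1)).flatten := by
    rw [← List.flatten_append, List.take_append_drop]; rfl
  rw [this, take_blocks_succ π i i.isLt]
  simp

end

/-- Lemma `sta`. Let `π ∈ S_n(132)` and `D = φ(π)`. Reading the entry `π_i`
produces a peak of `D` — i.e. the `i`-th down-step of `D` is immediately preceded by an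
up-step — if and only if `π_i` is a left-to-right minimum of `π`; and in that case the height of
this peak (the number of `u`'s minus the number of `d`'s in the prefix ending with that up-step)
is `h_i + 1`. -/
theorem stmt6 {n : ℕ} (π : Equiv.Perm (Fin n)) (hπ : Avoids132 π) (i : Fin n) :
    ((1 ≤ nthDown (phi π) i ∧ (phi π).getD (nthDown (phi π) i - 1) false = true)
        ↔ IsLTRMin π i) ∧
    (IsLTRMin π i →
      ((phi π).take (nthDown (phi π) i)).count true
        = ((phi π).take (nthDown (phi π) i)).count false + (hstat π i + 1)) := by
  obtain ⟨h1, h2, h3⟩ := initial_facts π hπ i i.isLt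
  obtain ⟨B, hB⟩ := phi_split π i
  have hle := prevH_le π hπ i
  rw [← ltr_iff π hπ i]
  simp only [Fin.eta] at h2
  generalize hk : hstat π i + 1 - prevH π i = k at *
  generalize ((blocks π).take i).flatten = P at *
  have hd : nthDown (phi π) i = P.length + k := by
    rw [hB]
    conv_lhs => rw [← h1]
    exact nthDown_split P B k
  rw [hd, hB]
  refine ⟨?_, fun _ => ?_⟩
  · rcases Nat.eq_zero_or_pos k with rfl | hkp
    · rcases h3 with rfl | ⟨Q, rfl⟩
      · simp
      · simp [List.getD]
    · simp only [hkp, iff_true]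
      refine ⟨by omega, ?_⟩
      rw [List.getD_append_right _ _ _ _ (by omega), List.getD_append _ _ _ _ (by simp; omega)]
      rw [List.getD_eq_getElem _ _ (by simp; omega)]
      simp
  · have : (P ++ (List.replicate k true ++ false :: B)).take (P.length + k)
        = P ++ List.replicate k true := by
      rw [← List.append_assoc]
      exact List.take_left' (by simp)
    rw [this]
    simp [h1, h2, List.count_replicate]
    omega
end

section
/- Let n, p be positive integers with 1 ≤ p ≤ n. The standard bijection φ, restricted to the set S_n(132, 1̂2⋯(p+1)) of permutations of length n that avoid 132 and avoid the hatted pattern obtained from the increasing pattern 12⋯(p+1) by marking its first entry, is a bijection onto the set of Dyck n-paths having no peak at height p. -/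
/-- `w` is a Dyck `n`-path: a word of length `2n` over `{u, d}` (`true` = up, `false` = down)
with `n` up-steps, in which every prefix contains at least as many `u`'s as `d`'s. -/
def IsDyckPath (n : ℕ) (w : List Bool) : Prop :=
  w.length = 2 * n ∧ w.count true = n ∧
    ∀ p : ℕ, (w.take p).count false ≤ (w.take p).count true

/-- `w` has a peak (an occurrence of the factor `ud`) at height `p`: the height is the number of
`u`'s minus the number of `d`'s in the prefix ending with the `u` of that occurrence. -/
def HasPeakAtHeight (w : List Bool) (p : ℕ) : Prop :=
  ∃ q : ℕ, q + 1 < w.length ∧ w.getD q false = true ∧ w.getD (q + 1) true = false ∧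
    (w.take (q + 1)).count true = (w.take (q + 1)).count false + p

/-! ### Words and height sequences -/

def prevF {n : ℕ} (c : ℕ) (f : Fin n → ℕ) (i : Fin n) : ℕ :=
  if _h : (i : ℕ) = 0 then c
  else f ⟨(i : ℕ) - 1, lt_of_le_of_lt (Nat.sub_le _ _) i.isLt⟩

lemma prevF_zero {n : ℕ} (c : ℕ) (f : Fin (n + 1) → ℕ) : prevF c f 0 = c := by
  simp [prevF]

lemma prevF_succ {n : ℕ} (c : ℕ) (f : Fin (n + 1) → ℕ) (i : Fin n) :
    prevF c f i.succ = prevF (f 0) (fun j => f j.succ) i := by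
  unfold prevF
  by_cases h : (i : ℕ) = 0
  · have : i.castSucc = 0 := by ext; simpa using h
    simp [h]
  · simp only [Fin.val_succ, Nat.add_eq_zero_iff, h, one_ne_zero, and_self, dite_false]
    congr 1
    ext
    simp
    omega

def encW : ℕ → List ℕ → List Bool
  | _, [] => []
  | c, h :: t => List.replicate (h + 1 - c) true ++ false :: encW h t

def decW : ℕ → List Bool → List ℕ
  | _, [] => []
  | c, true :: t => decW (c + 1) t
  | c, false :: t => (c - 1) :: decW (c - 1) t

def ValidL : ℕ → List ℕ → Prop
  | c, [] => c = 0
  | c, h :: t => c ≤ h + 1 ∧ ValidL h t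

def DyckR : ℕ → List Bool → Prop
  | c, [] => c = 0
  | c, true :: t => DyckR (c + 1) t
  | c, false :: t => 0 < c ∧ DyckR (c - 1) t

def PeakL (p : ℕ) : ℕ → List ℕ → Prop
  | _, [] => False
  | c, h :: t => (c ≤ h ∧ h + 1 = p) ∨ PeakL p h t

def PeakW (c : ℕ) (w : List Bool) (p : ℕ) : Prop :=
  ∃ q : ℕ, q + 1 < w.length ∧ w.getD q false = true ∧ w.getD (q + 1) true = false ∧
    c + (w.take (q + 1)).count true = (w.take (q + 1)).count false + p

lemma enc_ofFn {n : ℕ} (c : ℕ) (f : Fin n → ℕ) :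
    (List.ofFn fun i : Fin n =>
      List.replicate (f i + 1 - prevF c f i) true ++ [false]).flatten = encW c (List.ofFn f) := by
  induction n generalizing c with
  | zero => simp [encW]
  | succ n ih =>
    rw [List.ofFn_succ, List.ofFn_succ, List.flatten_cons, encW, ← ih]
    simp [prevF_zero, prevF_succ]

lemma phi_eq {n : ℕ} (π : Equiv.Perm (Fin n)) : phi π = encW 0 (List.ofFn (hstat π)) :=
  enc_ofFn 0 (hstat π)

lemma valid_ofFn {n : ℕ} (c : ℕ) (f : Fin n → ℕ) :
    ValidL c (List.ofFn f) ↔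
      c ≤ n ∧ (∀ i : Fin n, f i + i + 1 ≤ n) ∧ ∀ i, prevF c f i ≤ f i + 1 := by
  induction n generalizing c with
  | zero => simp [ValidL]
  | succ n ih =>
    rw [List.ofFn_succ, ValidL, ih, Fin.forall_fin_succ, Fin.forall_fin_succ]
    simp only [prevF_zero, prevF_succ, Fin.val_zero, Fin.val_succ]
    constructor
    · rintro ⟨h1, h2, h3, h4⟩
      exact ⟨by omega, ⟨by omega, fun i => by have := h3 i; omega⟩, h1, h4⟩
    · rintro ⟨h1, ⟨h2, h3⟩, h4, h5⟩
      exact ⟨h4, by omega, fun i => by have := h3 i; omega, h5⟩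

lemma peak_ofFn {n : ℕ} (p c : ℕ) (f : Fin n → ℕ) :
    PeakL p c (List.ofFn f) ↔ ∃ i, prevF c f i ≤ f i ∧ f i + 1 = p := by
  induction n generalizing c with
  | zero => simp [PeakL]
  | succ n ih =>
    rw [List.ofFn_succ, PeakL, ih, Fin.exists_fin_succ]
    simp only [prevF_zero, prevF_succ]

lemma dyck_replicate (k c : ℕ) (w : List Bool) :
    DyckR c (List.replicate k true ++ w) ↔ DyckR (c + k) w := by
  induction k generalizing c with
  | zero => simp
  | succ k ih =>
    rw [List.replicate_succ, List.cons_append, DyckR, ih]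
    rw [show c + 1 + k = c + (k + 1) by omega]

lemma dec_replicate (k c : ℕ) (w : List Bool) :
    decW c (List.replicate k true ++ w) = decW (c + k) w := by
  induction k generalizing c with
  | zero => simp
  | succ k ih =>
    rw [List.replicate_succ, List.cons_append, decW, ih]
    rw [show c + 1 + k = c + (k + 1) by omega]

lemma dyck_enc (c : ℕ) (l : List ℕ) (h : ValidL c l) : DyckR c (encW c l) := by
  induction l generalizing c with
  | nil => exact h
  | cons a t ih =>
    obtain ⟨h1, h2⟩ := h
    rw [encW, dyck_replicate, show c + (a + 1 - c) = a + 1 by omega, DyckR]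
    exact ⟨by omega, ih a h2⟩

lemma dec_enc (c : ℕ) (l : List ℕ) (h : ValidL c l) : decW c (encW c l) = l := by
  induction l generalizing c with
  | nil => rfl
  | cons a t ih =>
    obtain ⟨h1, h2⟩ := h
    rw [encW, dec_replicate, show c + (a + 1 - c) = a + 1 by omega, decW]
    simp [ih a h2]

lemma count_enc (c : ℕ) (l : List ℕ) : (encW c l).count false = l.length := by
  induction l generalizing c with
  | nil => rfl
  | cons a t ih => simp [encW, ih, List.count_replicate]

lemma enc_surj (c : ℕ) (w : List Bool) (h : DyckR c w) : ∃ l, ValidL c l ∧ encW c l = w := by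
  induction w generalizing c with
  | nil => exact ⟨[], h, rfl⟩
  | cons b t ih =>
    cases b with
    | true =>
      obtain ⟨l, h1, h2⟩ := ih (c + 1) h
      cases l with
      | nil => simp [ValidL] at h1
      | cons a l =>
        obtain ⟨h3, h4⟩ := h1
        refine ⟨a :: l, ⟨by omega, h4⟩, ?_⟩
        rw [← h2, encW, encW, show a + 1 - c = (a + 1 - (c + 1)) + 1 by omega,
          List.replicate_succ, List.cons_append]
    | false =>
      obtain ⟨h0, h⟩ := h
      obtain ⟨l, h1, h2⟩ := ih (c - 1) h
      refine ⟨(c - 1) :: l, ⟨by omega, h1⟩, ?_⟩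
      rw [encW, h2, show c - 1 + 1 - c = 0 by omega]
      rfl

lemma dyckR_iff (c : ℕ) (w : List Bool) :
    DyckR c w ↔ c + w.count true = w.count false ∧
      ∀ p : ℕ, (w.take p).count false ≤ c + (w.take p).count true := by
  induction w generalizing c with
  | nil => simp [DyckR]
  | cons b t ih =>
    cases b with
    | true =>
      rw [DyckR, ih]
      constructor
      · rintro ⟨h1, h2⟩
        refine ⟨by simp; omega, fun p => ?_⟩
        cases p with
        | zero => simp
        | succ p => have := h2 p; simp; omega
      · rintro ⟨h1, h2⟩
        refine ⟨by simp at h1; omega, fun p => ?_⟩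
        have := h2 (p + 1)
        simp at this; omega
    | false =>
      rw [DyckR, ih]
      constructor
      · rintro ⟨h0, h1, h2⟩
        refine ⟨by simp; omega, fun p => ?_⟩
        cases p with
        | zero => simp
        | succ p => have := h2 p; simp; omega
      · rintro ⟨h1, h2⟩
        have h0 := h2 1
        simp at h0
        refine ⟨by omega, by simp at h1; omega, fun p => ?_⟩
        have := h2 (p + 1)
        simp at this; omega

lemma isDyck_iff (n : ℕ) (w : List Bool) :
    IsDyckPath n w ↔ DyckR 0 w ∧ w.count false = n := by
  rw [dyckR_iff, IsDyckPath]
  have := List.count_true_add_count_false w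
  simp only [zero_add]
  constructor
  · rintro ⟨h1, h2, h3⟩
    exact ⟨⟨by omega, h3⟩, by omega⟩
  · rintro ⟨⟨h1, h3⟩, h2⟩
    exact ⟨by omega, by omega, h3⟩

lemma peakW_true (c p : ℕ) (t : List Bool) :
    PeakW c (true :: t) p ↔ (t.head? = some false ∧ c + 1 = p) ∨ PeakW (c + 1) t p := by
  constructor
  · rintro ⟨q, h1, h2, h3, h4⟩
    cases q with
    | zero =>
      left
      cases t with
      | nil => simp at h1
      | cons b t => simp at h3 h4; exact ⟨by simp [h3], by omega⟩
    | succ q =>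
      right
      refine ⟨q, by simpa using h1, by simpa using h2, by simpa using h3, ?_⟩
      simp at h4 ⊢; omega
  · rintro (⟨h1, h2⟩ | ⟨q, h1, h2, h3, h4⟩)
    · cases t with
      | nil => simp at h1
      | cons b t =>
        simp at h1
        exact ⟨0, by simp, by simp, by simp [h1], by simp; omega⟩
    · refine ⟨q + 1, by simpa using h1, by simpa using h2, by simpa using h3, ?_⟩
      rw [List.take_succ_cons]
      simp only [List.count_cons]
      simp
      omega

lemma peakW_false (c p : ℕ) (t : List Bool) :
    PeakW (c + 1) (false :: t) p ↔ PeakW c t p := by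
  constructor
  · rintro ⟨q, h1, h2, h3, h4⟩
    cases q with
    | zero => simp at h2
    | succ q =>
      refine ⟨q, by simpa using h1, by simpa using h2, by simpa using h3, ?_⟩
      simp at h4 ⊢; omega
  · rintro ⟨q, h1, h2, h3, h4⟩
    refine ⟨q + 1, by simpa using h1, by simpa using h2, by simpa using h3, ?_⟩
    rw [List.take_succ_cons]
    simp only [List.count_cons]
    simp
    omega

lemma peakW_replicate (c p k : ℕ) (t : List Bool) :
    PeakW c (List.replicate (k + 1) true ++ false :: t) p ↔ c + k + 1 = p ∨ PeakW (c + k) t p := by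
  induction k generalizing c with
  | zero => simp [peakW_true, peakW_false]
  | succ k ih =>
    rw [List.replicate_succ, List.cons_append, peakW_true, ih,
      show c + 1 + k = c + (k + 1) by omega]
    simp [List.replicate_succ]

lemma peak_enc (c p : ℕ) (l : List ℕ) (h : ValidL c l) :
    PeakW c (encW c l) p ↔ PeakL p c l := by
  induction l generalizing c with
  | nil => simp [encW, PeakL, PeakW]
  | cons a t ih =>
    obtain ⟨h1, h2⟩ := h
    rw [encW, PeakL, ← ih a h2]
    rcases Nat.lt_or_ge a c with hc | hc
    · obtain rfl : c = a + 1 := by omega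
      simp [peakW_false]
    · rw [show a + 1 - c = (a - c) + 1 by omega, peakW_replicate,
        show c + (a - c) = a by omega]
      simp [hc]

lemma hasPeak_iff (w : List Bool) (p : ℕ) : HasPeakAtHeight w p ↔ PeakW 0 w p := by
  simp [HasPeakAtHeight, PeakW]

/-! ### The code of a permutation -/

lemma hstat_bound {n : ℕ} (π : Equiv.Perm (Fin n)) (i : Fin n) : hstat π i + i + 1 ≤ n := by
  have : hstat π i ≤ (Finset.Ioi i).card := by
    apply Finset.card_le_card
    intro j
    simp
    tauto
  rw [Fin.card_Ioi] at this
  omega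

lemma hstat_lt_of_agree {n : ℕ} (π σ : Equiv.Perm (Fin n)) (i : Fin n)
    (hag : ∀ j < i, π j = σ j) (hlt : π i < σ i) : hstat σ i < hstat π i := by
  -- transport along σ⁻¹... compare the sets of values
  have key : ∀ ρ : Equiv.Perm (Fin n), hstat ρ i =
      (Finset.univ.filter fun v => i < ρ.symm v ∧ ρ i < v).card := by
    intro ρ
    unfold hstat
    apply Finset.card_bij (fun j _ => ρ j)
    · intro j; simp
    · intro a _ b _ h; exact ρ.injective h
    · intro v hv; refine ⟨ρ.symm v, ?_, by simp⟩; simpa using hv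
  have hag' : ∀ v, π.symm v < i ↔ σ.symm v < i := by
    intro v
    constructor
    · intro h
      have := hag _ h
      rw [Equiv.apply_symm_apply] at this
      have h2 : σ.symm v = π.symm v := by rw [Equiv.symm_apply_eq]; exact this
      rwa [h2]
    · intro h
      have := hag _ h
      rw [Equiv.apply_symm_apply] at this
      have h2 : π.symm v = σ.symm v := by rw [Equiv.symm_apply_eq]; exact this.symm
      rwa [h2]
  have hgt : ∀ ρ : Equiv.Perm (Fin n), ∀ v, ρ i ≠ v → (i < ρ.symm v ↔ ¬ ρ.symm v < i) := by
    intro ρ v hv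
    have : ρ.symm v ≠ i := by
      intro h; apply hv; rw [← h]; simp
    constructor
    · intro h; exact not_lt.mpr h.le
    · intro h; exact lt_of_le_of_ne (not_lt.mp h) this.symm
  rw [key, key]
  apply Finset.card_lt_card
  rw [Finset.ssubset_iff_of_subset]
  · refine ⟨σ i, ?_, by simp⟩
    simp only [Finset.mem_filter, Finset.mem_univ, true_and]
    refine ⟨?_, hlt⟩
    rw [hgt π _ hlt.ne, hag']
    simp
  · intro v
    simp only [Finset.mem_filter, Finset.mem_univ, true_and]
    rintro ⟨h1, h2⟩
    have h3 := hlt.trans h2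
    refine ⟨?_, h3⟩
    rw [hgt π _ h3.ne, hag', ← hgt σ _ h2.ne]
    exact h1

lemma hstat_injective {n : ℕ} : Function.Injective (fun π : Equiv.Perm (Fin n) => hstat π) := by
  intro π σ h
  have h' : ∀ i, hstat π i = hstat σ i := fun i => congrFun h i
  ext1 i
  induction i using WellFoundedLT.induction with
  | ind i ih =>
    rcases lt_trichotomy (π i) (σ i) with hlt | heq | hgt
    · have := hstat_lt_of_agree π σ i ih hlt
      rw [h'] at this; omega
    · exact heq
    · have := hstat_lt_of_agree σ π i (fun j hj => (ih j hj).symm) hgt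
      rw [h'] at this; omega

lemma hstat_surj {n : ℕ} (f : Fin n → ℕ) (hf : ∀ i : Fin n, f i + i + 1 ≤ n) :
    ∃ π : Equiv.Perm (Fin n), hstat π = f := by
  let F : Equiv.Perm (Fin n) → ((i : Fin n) → Fin (n - i)) :=
    fun π i => ⟨hstat π i, by have := hstat_bound π i; omega⟩
  have hinj : Function.Injective F := by
    intro π σ h
    apply hstat_injective
    funext i
    have := congrFun h i
    simpa [F] using this
  have hcard : Fintype.card (Equiv.Perm (Fin n)) = Fintype.card ((i : Fin n) → Fin (n - i)) := by
    rw [Fintype.card_perm, Fintype.card_pi]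
    simp only [Fintype.card_fin]
    rw [Fin.prod_univ_eq_prod_range (fun i => n - i) n, ← Nat.descFactorial_eq_prod_range,
      Nat.descFactorial_self]
  have hbij := (Fintype.bijective_iff_injective_and_card F).2 ⟨hinj, hcard⟩
  obtain ⟨π, hπ⟩ := hbij.2 (fun i => ⟨f i, by have := hf i; omega⟩)
  refine ⟨π, ?_⟩
  funext i
  have := congrFun hπ i
  simpa [F] using this

/-- For a 132-avoider, the entries after and above a given entry are increasing. -/
lemma avoids_mono {n : ℕ} {π : Equiv.Perm (Fin n)} (h : Avoids132 π) {a b c : Fin n}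
    (hab : a < b) (hbc : b < c) (hac : π a < π c) : π b < π c := by
  by_contra hcon
  apply h
  refine ⟨a, b, c, hab, hbc, hac, lt_of_le_of_ne (not_lt.mp hcon) ?_⟩
  intro h; exact hbc.ne' (π.injective h)

lemma avoids_step {n : ℕ} {π : Equiv.Perm (Fin n)} (h : Avoids132 π) (a b : Fin n)
    (hab : (a : ℕ) + 1 = b) : hstat π a ≤ hstat π b + 1 := by
  have : (Finset.univ.filter fun j => a < j ∧ π a < π j) ⊆
      insert b (Finset.univ.filter fun j => b < j ∧ π b < π j) := by
    intro j
    simp only [Finset.mem_filter, Finset.mem_univ, true_and, Finset.mem_insert]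
    rintro ⟨h1, h2⟩
    by_cases hj : j = b
    · exact Or.inl hj
    · right
      have hbj : b < j := by
        rw [Fin.lt_def] at h1 ⊢
        have : (j : ℕ) ≠ b := fun h => hj (Fin.ext h)
        omega
      exact ⟨hbj, avoids_mono h (by rw [Fin.lt_def]; omega) hbj h2⟩
  exact (Finset.card_le_card this).trans (Finset.card_insert_le _ _)

lemma avoids_of_step {n : ℕ} {π : Equiv.Perm (Fin n)}
    (h : ∀ a b : Fin n, (a : ℕ) + 1 = b → hstat π a ≤ hstat π b + 1) : Avoids132 π := by
  have key : ∀ k : ℕ, ∀ a b c : Fin n, (b : ℕ) = a + 1 + k → b < c → π a < π c → π c < π b →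
      False := by
    intro k
    induction k with
    | zero =>
      intro a b c hab hbc h1 h2
      have hs := h a b (by omega)
      have hab' : a < b := by rw [Fin.lt_def]; omega
      have hsub : insert b (insert c (Finset.univ.filter fun j => b < j ∧ π b < π j)) ⊆
          (Finset.univ.filter fun j => a < j ∧ π a < π j) := by
        intro j
        simp only [Finset.mem_filter, Finset.mem_univ, true_and, Finset.mem_insert]
        rintro (rfl | rfl | ⟨h3, h4⟩)
        · exact ⟨hab', h1.trans h2⟩
        · exact ⟨hab'.trans hbc, h1⟩
        · exact ⟨hab'.trans h3, (h1.trans h2).trans h4⟩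
      have hc := Finset.card_le_card hsub
      rw [Finset.card_insert_of_notMem, Finset.card_insert_of_notMem] at hc
      · unfold hstat at hs; omega
      · simp [h2.le]
      · simp [hbc.ne]
    | succ k ih =>
      intro a b c hab hbc h1 h2
      let m : Fin n := ⟨a + 1, by omega⟩
      have hm : (m : ℕ) = a + 1 := rfl
      have hmc : m < c := by rw [Fin.lt_def] at hbc ⊢; omega
      rcases lt_trichotomy (π m) (π c) with hlt | heq | hgt
      · exact ih m b c (by omega) hbc hlt h2
      · exact hmc.ne (π.injective heq)
      · have hs := h a m (by omega)
        have ham : a < m := by rw [Fin.lt_def]; omega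
        have hsub : insert m (insert c (Finset.univ.filter fun j => m < j ∧ π m < π j)) ⊆
            (Finset.univ.filter fun j => a < j ∧ π a < π j) := by
          intro j
          simp only [Finset.mem_filter, Finset.mem_univ, true_and, Finset.mem_insert]
          rintro (rfl | rfl | ⟨h3, h4⟩)
          · exact ⟨ham, h1.trans hgt⟩
          · exact ⟨ham.trans hmc, h1⟩
          · exact ⟨ham.trans h3, (h1.trans hgt).trans h4⟩
        have hc := Finset.card_le_card hsub
        rw [Finset.card_insert_of_notMem, Finset.card_insert_of_notMem] at hc
        · unfold hstat at hs; omega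
        · simp [hgt.le]
        · simp [hmc.ne]
  rintro ⟨a, b, c, hab, hbc, h1, h2⟩
  rw [Fin.lt_def] at hab
  exact key (b - a - 1) a b c (by omega) hbc h1 h2

lemma avoids_iff {n : ℕ} (π : Equiv.Perm (Fin n)) :
    Avoids132 π ↔ ValidL 0 (List.ofFn (hstat π)) := by
  rw [valid_ofFn]
  constructor
  · intro h
    refine ⟨Nat.zero_le _, hstat_bound π, fun i => ?_⟩
    unfold prevF
    split_ifs with h0
    · omega
    · exact avoids_step h _ _ (by simp; omega)
  · rintro ⟨-, -, h⟩
    apply avoids_of_step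
    intro a b hab
    have := h b
    unfold prevF at this
    rw [dif_neg (by omega)] at this
    convert this using 2
    ext
    simp
    omega

/-- Peaks correspond to left-to-right minima. -/
lemma peak_pos_iff {n : ℕ} {π : Equiv.Perm (Fin n)} (h : Avoids132 π) (i : Fin n) :
    prevF 0 (hstat π) i ≤ hstat π i ↔ IsLTRMin π i := by
  unfold prevF IsLTRMin
  split_ifs with h0
  · simp only [Nat.zero_le, true_iff]
    intro j hj
    rw [Fin.lt_def] at hj
    omega
  · set m : Fin n := ⟨(i : ℕ) - 1, lt_of_le_of_lt (Nat.sub_le _ _) i.isLt⟩ with hm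
    have hmv : (m : ℕ) = i - 1 := rfl
    have hmi : m < i := by rw [Fin.lt_def]; omega
    constructor
    · intro hle
      have h1 : π i < π m := by
        by_contra hcon
        have hlt : π m < π i := lt_of_le_of_ne (not_lt.mp hcon)
          (fun h => hmi.ne (π.injective h))
        have hsub : insert i (Finset.univ.filter fun j => i < j ∧ π i < π j) ⊆
            (Finset.univ.filter fun j => m < j ∧ π m < π j) := by
          intro j
          simp only [Finset.mem_filter, Finset.mem_univ, true_and, Finset.mem_insert]
          rintro (rfl | ⟨h3, h4⟩)
          · exact ⟨hmi, hlt⟩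
          · exact ⟨hmi.trans h3, hlt.trans h4⟩
        have hc := Finset.card_le_card hsub
        rw [Finset.card_insert_of_notMem (by simp)] at hc
        unfold hstat at hle
        omega
      intro j hj
      by_contra hcon
      have hlt : π j < π i := lt_of_le_of_ne (not_lt.mp hcon)
        (fun h => hj.ne (π.injective h))
      have hjm : j < m := by
        rw [Fin.lt_def] at hj ⊢
        have : (j : ℕ) ≠ m := by
          intro h
          have : j = m := Fin.ext h
          rw [this] at hlt
          exact absurd h1 (not_lt.mpr hlt.le)
        omega
      exact h ⟨j, m, i, hjm, hmi, hlt, h1⟩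
    · intro hmin
      apply Finset.card_le_card
      intro j
      simp only [Finset.mem_filter, Finset.mem_univ, true_and]
      rintro ⟨h3, h4⟩
      have h5 := (hmin m hmi).trans h4
      refine ⟨?_, h5⟩
      rcases lt_trichotomy i j with h6 | h6 | h6
      · exact h6
      · subst h6; exact absurd h4 (not_lt.mpr (hmin m hmi).le)
      · rw [Fin.lt_def] at h3 h6
        omega

/-! ### Hatted pattern -/

/-- A finset of positions on which `π` is increasing. -/
def IncOn {n : ℕ} (π : Equiv.Perm (Fin n)) (s : Finset (Fin n)) : Prop :=
  ∀ a ∈ s, ∀ b ∈ s, a < b → π a < π b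

lemma avoidsHat_iff_s7 {n p : ℕ} (π : Equiv.Perm (Fin n)) :
    AvoidsHat (1 : Equiv.Perm (Fin (p + 1))) 0 π ↔
      ∀ s : Finset (Fin n), s.card = p → IncOn π s → ∃ x, x ∉ s ∧ IncOn π (insert x s) := by
  constructor
  · intro h s hs hinc
    obtain ⟨g, ⟨hg1, hg2⟩, hsub⟩ := h (s.orderEmbOfFin hs) (s.orderEmbOfFin hs).strictMono (by
      intro a b
      have hm : StrictMono (fun a => π (s.orderEmbOfFin hs a)) := by
        intro a b hab
        exact hinc _ (by simp) _ (by simp) ((s.orderEmbOfFin hs).strictMono hab)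
      have := hm.lt_iff_lt (a := a) (b := b)
      simp at this ⊢
      exact this.symm)
    have hsub' : s ⊆ Finset.univ.image g := by
      intro x hx
      have : x ∈ Set.range (s.orderEmbOfFin hs) := by
        rw [Finset.range_orderEmbOfFin]; exact hx
      obtain ⟨y, hy⟩ := hsub this
      simp only [Finset.mem_image, Finset.mem_univ, true_and]
      exact ⟨y, hy⟩
    have hcard : (Finset.univ.image g).card = p + 1 := by
      rw [Finset.card_image_of_injective _ hg1.injective]; simp
    have hex : ∃ x ∈ Finset.univ.image g, x ∉ s := by
      apply Finset.exists_mem_notMem_of_card_lt_card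
      omega
    obtain ⟨x, hx, hxs⟩ := hex
    refine ⟨x, hxs, ?_⟩
    have hall : ∀ y ∈ insert x s, ∃ k, g k = y := by
      intro y hy
      rcases Finset.mem_insert.1 hy with rfl | hy
      · simpa using hx
      · simpa using hsub' hy
    intro a ha b hb hab
    obtain ⟨k, rfl⟩ := hall a ha
    obtain ⟨l, rfl⟩ := hall b hb
    rw [← hg2]
    simpa using hg1.lt_iff_lt.1 hab
  · intro h g hg1 hg2
    have hcard : (Finset.univ.image g).card = p := by
      rw [Finset.card_image_of_injective _ hg1.injective]; simp
    obtain ⟨x, hx, hinc⟩ := h (Finset.univ.image g) hcard (by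
      intro a ha b hb hab
      simp only [Finset.mem_image, Finset.mem_univ, true_and] at ha hb
      obtain ⟨k, rfl⟩ := ha
      obtain ⟨l, rfl⟩ := hb
      rw [← hg2]
      simpa using hg1.lt_iff_lt.1 hab)
    have hc2 : (insert x (Finset.univ.image g)).card = p + 1 := by
      rw [Finset.card_insert_of_notMem hx, hcard]
    refine ⟨(insert x (Finset.univ.image g)).orderEmbOfFin hc2, ⟨OrderEmbedding.strictMono _, ?_⟩, ?_⟩
    · intro a b
      have hm : StrictMono (fun a => π ((insert x (Finset.univ.image g)).orderEmbOfFin hc2 a)) := by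
        intro a b hab
        exact hinc _ (Finset.orderEmbOfFin_mem _ _ _) _ (Finset.orderEmbOfFin_mem _ _ _)
          (((insert x (Finset.univ.image g)).orderEmbOfFin hc2).strictMono hab)
      exact (hm.lt_iff_lt (a := a) (b := b)).symm
    · rw [Finset.range_orderEmbOfFin]
      rintro _ ⟨k, rfl⟩
      simp

lemma avoidsHat_iff_noPeak {n p : ℕ} (hp : 1 ≤ p) {π : Equiv.Perm (Fin n)} (h : Avoids132 π) :
    AvoidsHat (1 : Equiv.Perm (Fin (p + 1))) 0 π ↔
      ¬ ∃ i, IsLTRMin π i ∧ hstat π i + 1 = p := by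
  rw [avoidsHat_iff_s7]
  have hup : ∀ i : Fin n,
      IncOn π (insert i (Finset.univ.filter fun j => i < j ∧ π i < π j)) := by
    intro i a ha b hb hab
    simp only [Finset.mem_filter, Finset.mem_univ, true_and, Finset.mem_insert] at ha hb
    rcases ha with rfl | ⟨ha1, ha2⟩
    · rcases hb with rfl | ⟨hb1, hb2⟩
      · exact absurd hab (lt_irrefl _)
      · exact hb2
    · rcases hb with rfl | ⟨hb1, hb2⟩
      · exact absurd hab (not_lt.mpr ha1.le)
      · exact avoids_mono h ha1 hab hb2
  have hupc : ∀ i : Fin n,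
      (insert i (Finset.univ.filter fun j => i < j ∧ π i < π j)).card = hstat π i + 1 := by
    intro i
    rw [Finset.card_insert_of_notMem (by simp)]
    rfl
  constructor
  · rintro hh ⟨i, hi, hip⟩
    obtain ⟨x, hx, hinc⟩ := hh _ ((hupc i).trans hip) (hup i)
    simp only [Finset.mem_filter, Finset.mem_univ, true_and, Finset.mem_insert, not_or] at hx
    rcases lt_trichotomy x i with h1 | h1 | h1
    · have := hinc x (by simp) i (by simp) h1
      exact absurd this (not_lt.mpr (hi x h1).le)
    · exact hx.1 h1
    · exact hx.2 ⟨h1, hinc i (by simp) x (by simp) h1⟩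
  · intro hno s hs hinc
    have hne : s.Nonempty := by rw [← Finset.card_pos]; omega
    set i := s.min' hne with hi
    have his : i ∈ s := Finset.min'_mem _ _
    have hle : ∀ y ∈ s, i ≤ y := fun y hy => Finset.min'_le _ _ hy
    by_cases hmin : IsLTRMin π i
    · have hsub : s ⊆ insert i (Finset.univ.filter fun j => i < j ∧ π i < π j) := by
        intro y hy
        simp only [Finset.mem_filter, Finset.mem_univ, true_and, Finset.mem_insert]
        rcases (hle y hy).eq_or_lt with h1 | h1
        · exact Or.inl h1.symm
        · exact Or.inr ⟨h1, hinc i his y hy h1⟩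
      have hc := Finset.card_le_card hsub
      rw [hupc, hs] at hc
      have hne2 : hstat π i + 1 ≠ p := fun h => hno ⟨i, hmin, h⟩
      obtain ⟨x, hx, hxs⟩ := Finset.exists_mem_notMem_of_card_lt_card
        (s := s) (t := insert i (Finset.univ.filter fun j => i < j ∧ π i < π j))
        (by rw [hupc, hs]; omega)
      refine ⟨x, hxs, ?_⟩
      have hsub2 := Finset.insert_subset hx hsub
      intro a ha b hb hab
      exact hup i a (hsub2 ha) b (hsub2 hb) hab
    · unfold IsLTRMin at hmin
      push Not at hmin
      obtain ⟨j, hj, hji⟩ := hmin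
      have hlt : π j < π i := lt_of_le_of_ne hji (fun h => hj.ne (π.injective h))
      refine ⟨j, fun hjs => absurd (hle j hjs) (not_le.mpr hj), ?_⟩
      intro a ha b hb hab
      rcases Finset.mem_insert.1 ha with rfl | ha2
      · rcases Finset.mem_insert.1 hb with rfl | hb
        · exact absurd hab (lt_irrefl _)
        · rcases (hle b hb).eq_or_lt with h1 | h1
          · rw [← h1]; exact hlt
          · exact hlt.trans (hinc i his b hb h1)
      · rcases Finset.mem_insert.1 hb with rfl | hb
        · exact absurd ((hle a ha2).trans_lt hab) (not_lt.mpr hj.le)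
        · exact hinc a ha2 b hb hab

lemma peak_phi {n : ℕ} (p : ℕ) {π : Equiv.Perm (Fin n)} (h : Avoids132 π) :
    HasPeakAtHeight (phi π) p ↔ ∃ i, IsLTRMin π i ∧ hstat π i + 1 = p := by
  rw [hasPeak_iff, phi_eq, peak_enc _ _ _ ((avoids_iff π).1 h), peak_ofFn]
  simp only [peak_pos_iff h]

/-- Theorem `cat`. For `1 ≤ p ≤ n`, the standard bijection `φ`, restricted to
`S_n(132, 1̂2⋯(p+1))` — permutations avoiding `132` and avoiding the hatted pattern obtained
from the increasing pattern `12⋯(p+1)` (the identity permutation of length `p + 1`) by marking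
its first entry — is a bijection onto the set of Dyck `n`-paths with no peak at height `p`. -/
theorem stmt7 (n p : ℕ) (hp1 : 1 ≤ p) (hpn : p ≤ n) :
    Set.BijOn phi
      {π : Equiv.Perm (Fin n) | Avoids132 π ∧ AvoidsHat (1 : Equiv.Perm (Fin (p + 1))) 0 π}
      {w : List Bool | IsDyckPath n w ∧ ¬ HasPeakAtHeight w p} := by
  refine ⟨?_, ?_, ?_⟩
  · rintro π ⟨h1, h2⟩
    have hv := (avoids_iff π).1 h1
    refine ⟨?_, ?_⟩
    · rw [isDyck_iff, phi_eq]
      refine ⟨dyck_enc _ _ hv, ?_⟩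
      rw [count_enc, List.length_ofFn]
    · rw [peak_phi p h1, ← avoidsHat_iff_noPeak hp1 h1]
      exact h2
  · rintro π ⟨h1, -⟩ σ ⟨h2, -⟩ h
    rw [phi_eq, phi_eq] at h
    have h3 := congrArg (decW 0) h
    rw [dec_enc _ _ ((avoids_iff π).1 h1), dec_enc _ _ ((avoids_iff σ).1 h2)] at h3
    exact hstat_injective (List.ofFn_injective h3)
  · rintro w ⟨hw, hpk⟩
    rw [isDyck_iff] at hw
    obtain ⟨hw1, hw2⟩ := hw
    obtain ⟨l, hl, rfl⟩ := enc_surj 0 w hw1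
    rw [count_enc] at hw2
    subst hw2
    have hlf : List.ofFn (fun i : Fin l.length => l.get i) = l := List.ofFn_get l
    have hl' := hl
    rw [← hlf, valid_ofFn] at hl'
    obtain ⟨π, hπ⟩ := hstat_surj (fun i : Fin l.length => l.get i) hl'.2.1
    have hlist : List.ofFn (hstat π) = l := by rw [hπ, hlf]
    have hphi : phi π = encW 0 l := by rw [phi_eq, hlist]
    have hav : Avoids132 π := by rw [avoids_iff, hlist]; exact hl
    refine ⟨π, ⟨hav, ?_⟩, hphi⟩
    rw [avoidsHat_iff_noPeak hp1 hav, ← peak_phi p hav, hphi]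
    exact hpk
end

section
/- For every positive integer n, the number of permutations of length n avoiding 132 and avoiding the hatted pattern 1̂2 equals the n-th Fine number F_n; equivalently, |S_n(132, 1̂2)| equals the number of Dyck n-paths with no peak at height 1. -/
/-- Good trees: every node on the right spine has a nonempty left subtree. -/
def goodTree : BinaryTree Unit → Bool
  | .nil => true
  | .node _ .nil _ => false
  | .node _ (.node _ _ _) r => goodTree r

lemma goodTree_node (u : Unit) (l r : BinaryTree Unit) :
    goodTree (.node u l r) = true ↔ l ≠ .nil ∧ goodTree r = true := by
  cases l <;> simp [goodTree]

/-- Number of good trees with `n` nodes. -/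
def goodCount (n : ℕ) : ℕ :=
  ((BinaryTree.treesOfNumNodesEq n).filter fun t => goodTree t = true).card

lemma goodCount_zero : goodCount 0 = 1 := by
  simp [goodCount, goodTree, Finset.filter_singleton]

lemma goodCount_succ (n : ℕ) : goodCount (n + 1) =
    ∑ ij ∈ Finset.HasAntidiagonal.antidiagonal n, (if ij.1 = 0 then 0 else catalan ij.1) * goodCount ij.2 := by
  unfold goodCount
  rw [BinaryTree.treesOfNumNodesEq_succ, Finset.filter_biUnion, Finset.card_biUnion]
  · apply Finset.sum_congr rfl
    rintro ⟨i, j⟩ H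
    rw [Finset.filter_map, Finset.card_map]
    have : (Finset.filter ((fun t => goodTree t = true) ∘ (fun x : BinaryTree Unit × BinaryTree Unit => BinaryTree.node () x.1 x.2))
        (BinaryTree.treesOfNumNodesEq i ×ˢ BinaryTree.treesOfNumNodesEq j))
        = ((BinaryTree.treesOfNumNodesEq i).filter (fun t => t ≠ .nil)) ×ˢ
          ((BinaryTree.treesOfNumNodesEq j).filter fun t => goodTree t = true) := by
      ext ⟨a, b⟩
      simp [goodTree_node]
      tauto
    refine (congrArg Finset.card this).trans ?_
    rw [Finset.card_product]
    congr 1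
    by_cases hi : i = 0
    · subst hi; simp [Finset.filter_singleton]
    · rw [if_neg hi, ← BinaryTree.treesOfNumNodesEq_card_eq_catalan, Finset.filter_true_of_mem]
      intro t ht h
      subst h
      simp at ht
      omega
  · rintro ⟨a, b⟩ - ⟨c, d⟩ - hne
    simp only [Function.onFun, Finset.disjoint_left]
    intro t h1 h2
    simp only [Finset.mem_filter, Finset.mem_map, Finset.mem_product, BinaryTree.mem_treesOfNumNodesEq,
      Prod.exists] at h1 h2
    obtain ⟨⟨x, y, ⟨hx, hy⟩, rfl⟩, -⟩ := h1
    obtain ⟨⟨x', y', ⟨hx', hy'⟩, h⟩, -⟩ := h2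
    simp at h
    apply hne
    grind

lemma goodCount_rec (m : ℕ) (hm : 1 ≤ m) : catalan m = 2 * goodCount m + goodCount (m - 1) := by
  let c : PowerSeries ℤ := PowerSeries.mk fun n => (catalan n : ℤ)
  let g : PowerSeries ℤ := PowerSeries.mk fun n => (goodCount n : ℤ)
  have hc : c = 1 + PowerSeries.X * (c * c) := by
    ext n
    cases n with
    | zero => simp [c]
    | succ n =>
      rw [map_add, PowerSeries.coeff_succ_X_mul, PowerSeries.coeff_mul]
      simp [c, catalan_succ', PowerSeries.coeff_one]
  have hg : g = 1 + PowerSeries.X * ((c - 1) * g) := by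
    ext n
    cases n with
    | zero => simp [g, goodCount_zero]
    | succ n =>
      rw [map_add, PowerSeries.coeff_succ_X_mul, PowerSeries.coeff_mul]
      simp only [g, c, goodCount_succ, PowerSeries.coeff_one, PowerSeries.coeff_mk, map_sub]
      push_cast
      simp only [Nat.add_eq_zero_iff, one_ne_zero, and_false, if_false, zero_add]
      apply Finset.sum_congr rfl
      rintro ⟨i, j⟩ -
      by_cases hi : i = 0 <;> simp [hi]
  have key : c + 1 = 2 * g + PowerSeries.X * g := by
    linear_combination (-(c+1)) * hg + g * hc
  obtain ⟨k, rfl⟩ : ∃ k, m = k + 1 := ⟨m - 1, by omega⟩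
  have := congrArg (PowerSeries.coeff (k + 1)) key
  rw [map_add, map_add, PowerSeries.coeff_succ_X_mul, two_mul, map_add] at this
  simp [c, g, PowerSeries.coeff_one] at this
  simp
  omega

lemma goodCount_eq (F : ℕ → ℕ) (hF0 : F 0 = 1)
    (hFrec : ∀ m : ℕ, 1 ≤ m → catalan m = 2 * F m + F (m - 1)) (n : ℕ) : goodCount n = F n := by
  induction n with
  | zero => rw [goodCount_zero, hF0]
  | succ n ih =>
    have h1 := hFrec (n + 1) (by omega)
    have h2 := goodCount_rec (n + 1) (by omega)
    simp at h1 h2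
    omega

/-- The set of good trees with `n` nodes. -/
def goodSet (n : ℕ) : Set (BinaryTree Unit) := {t | t.numNodes = n ∧ goodTree t = true}

lemma card_goodSet (n : ℕ) : Nat.card (goodSet n) = goodCount n := by
  have : goodSet n = ((BinaryTree.treesOfNumNodesEq n).filter fun t => goodTree t = true :
      Finset (BinaryTree Unit)) := by
    ext t; simp [goodSet]
  rw [this, Nat.card_coe_set_eq, Set.ncard_coe_finset, goodCount]

/-- 132-avoidance relation. -/
def R132 (a b c : ℕ) : Prop := ¬ (a < c ∧ c < b)

/-- `x` is isolated in `l`. -/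
def Iso (l : List ℕ) (x : ℕ) : Prop := l.Pairwise fun a b => (a = x ∨ b = x) → ¬ a < b

/-- The permutation of a tree (shifted by `s`). -/
def enc : BinaryTree Unit → ℕ → List ℕ
  | .nil, _ => []
  | .node _ l r, s => enc l (s + r.numNodes) ++ (s + r.numNodes + l.numNodes) :: enc r s

lemma enc_mem (t : BinaryTree Unit) (s x : ℕ) : x ∈ enc t s ↔ s ≤ x ∧ x < s + t.numNodes := by
  induction t generalizing s with
  | nil => simp [enc]
  | node u l r ihl ihr =>
    simp [enc, BinaryTree.numNodes, ihl, ihr]; omega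

lemma enc_nodup (t : BinaryTree Unit) (s : ℕ) : (enc t s).Nodup := by
  induction t generalizing s with
  | nil => simp [enc]
  | node u l r ihl ihr =>
    simp only [enc, List.nodup_append, List.nodup_cons, List.mem_cons, enc_mem]
    refine ⟨ihl _, ⟨by omega, ihr _⟩, ?_⟩
    rintro a ha b (rfl | hb) <;> omega

lemma enc_length (t : BinaryTree Unit) (s : ℕ) : (enc t s).length = t.numNodes := by
  induction t generalizing s with
  | nil => simp [enc]
  | node u l r ihl ihr =>
    simp [enc, BinaryTree.numNodes, ihl, ihr]; omega

lemma enc_av (t : BinaryTree Unit) (s : ℕ) : (enc t s).Triplewise R132 := by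
  induction t generalizing s with
  | nil => simp [enc]
  | node u l r ihl ihr =>
    simp only [enc, List.triplewise_append, List.triplewise_cons, List.pairwise_cons, List.mem_cons]
    refine ⟨ihl _, ⟨?_, ihr _⟩, ?_, ?_⟩
    · rw [List.pairwise_iff_forall_sublist]
      intro a b hab
      have := (enc_mem r s a).1 (hab.subset (by simp))
      have := (enc_mem r s b).1 (hab.subset (by simp))
      unfold R132; omega
    · intro a ha
      rw [enc_mem] at ha
      constructor
      · intro b hb
        rw [enc_mem] at hb
        unfold R132; omega
      · rw [List.pairwise_iff_forall_sublist]
        intro c d hab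
        have := (enc_mem r s c).1 (hab.subset (by simp))
        have := (enc_mem r s d).1 (hab.subset (by simp))
        unfold R132; omega
    · intro a ha
      rw [List.pairwise_iff_forall_sublist]
      intro c d hab
      have := (enc_mem l _ c).1 (hab.subset (by simp))
      have := (enc_mem l _ d).1 (hab.subset (by simp))
      rw [enc_mem] at ha
      unfold R132; omega

lemma iso_of_not_mem (l : List ℕ) (x : ℕ) (h : x ∉ l) : Iso l x := by
  unfold Iso
  rw [List.pairwise_iff_forall_sublist]
  intro c d hab
  have := hab.subset (a := c) (by simp)
  have := hab.subset (a := d) (by simp)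
  rintro (rfl | rfl) <;> contradiction

lemma iso_node (u : Unit) (l r : BinaryTree Unit) (s x : ℕ) (hx : x ∈ enc (.node u l r) s) :
    Iso (enc (.node u l r) s) x ↔
      (x = s + r.numNodes + l.numNodes ∧ l = .nil) ∨ (x ∈ enc r s ∧ Iso (enc r s) x) := by
  have hxm := hx
  rw [enc_mem] at hx
  simp only [enc, List.mem_append, List.mem_cons] at hxm
  simp only [BinaryTree.numNodes] at hx
  have e : Iso (enc (.node u l r) s) x ↔ (Iso (enc l (s + r.numNodes)) x ∧ (Iso (enc r s) x) ∧
      (∀ b ∈ enc l (s + r.numNodes), ¬ (b = x ∨ s + r.numNodes + l.numNodes = x))) := by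
    simp only [Iso, enc, List.pairwise_append, List.pairwise_cons, List.mem_cons]
    constructor
    · rintro ⟨h1, ⟨h2, h3⟩, h4⟩
      refine ⟨h1, h3, ?_⟩
      intro b hb h
      have := h4 b hb _ (Or.inl rfl) h
      rw [enc_mem] at hb
      omega
    · rintro ⟨h1, h2, h3⟩
      refine ⟨h1, ⟨?_, h2⟩, ?_⟩
      · intro a ha
        rw [enc_mem] at ha
        omega
      · rintro a ha b (rfl | hb)
        · intro h; exact absurd h (h3 a ha)
        · rw [enc_mem] at ha hb
          omega
  rw [e]
  constructor
  · rintro ⟨h1, h2, h3⟩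
    rcases hxm with h | h | h
    · exact absurd (Or.inl rfl) (h3 x h)
    · left
      refine ⟨h, ?_⟩
      cases l with
      | nil => rfl
      | node u a b =>
        exfalso
        refine h3 (s + r.numNodes) ?_ (Or.inr h.symm)
        rw [enc_mem]; simp [BinaryTree.numNodes]
    · exact Or.inr ⟨h, h2⟩
  · rintro (⟨h1, rfl⟩ | ⟨h1, h2⟩)
    · refine ⟨by simp [enc, Iso], iso_of_not_mem _ _ ?_, by simp [enc]⟩
      rw [enc_mem]; simp [BinaryTree.numNodes] at h1; omega
    · rw [enc_mem] at h1
      refine ⟨iso_of_not_mem _ _ ?_, h2, ?_⟩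
      · rw [enc_mem]; omega
      · intro b hb
        rw [enc_mem] at hb; omega

lemma enc_good (t : BinaryTree Unit) (s : ℕ) :
    (∀ x ∈ enc t s, ¬ Iso (enc t s) x) ↔ goodTree t = true := by
  induction t generalizing s with
  | nil => simp [enc, goodTree]
  | node u l r ihl ihr =>
    rw [goodTree_node, ← ihr s]
    constructor
    · intro h
      constructor
      · intro hl
        have hm : s + r.numNodes + l.numNodes ∈ enc (.node u l r) s := by simp [enc]
        exact h _ hm ((iso_node u l r s _ hm).2 (Or.inl ⟨rfl, hl⟩))
      · intro x hx hi
        have hm : x ∈ enc (.node u l r) s := by simp [enc, hx]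
        exact h _ hm ((iso_node u l r s _ hm).2 (Or.inr ⟨hx, hi⟩))
    · rintro ⟨h1, h2⟩ x hx hi
      rcases (iso_node u l r s _ hx).1 hi with h | h
      · exact h1 h.2
      · exact h2 x h.1 h.2

lemma enc_inj (t t' : BinaryTree Unit) (s : ℕ) (h : enc t s = enc t' s) : t = t' := by
  induction t generalizing t' s with
  | nil =>
    cases t' with
    | nil => rfl
    | node => simp [enc] at h
  | node u l r ihl ihr =>
    cases t' with
    | nil => simp [enc] at h
    | node u' l' r' =>
      have hlen := congrArg List.length h
      rw [enc_length, enc_length] at hlen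
      simp only [BinaryTree.numNodes] at hlen
      simp only [enc] at h
      rw [show s + r.numNodes + l.numNodes = s + r'.numNodes + l'.numNodes by omega] at h
      have h' := (List.append_cons_inj_of_notMem (by rw [enc_mem]; omega) (by rw [enc_mem]; omega)).1 h
      obtain ⟨h1, h2⟩ := h'
      have e2 := ihr _ _ h2.2
      subst e2
      rw [ihl _ _ h1]

lemma cut_lemma (s m : ℕ) (A B : Finset ℕ) (h : ∀ x, (x ∈ A ∨ x ∈ B) ↔ s ≤ x ∧ x < s + m)
    (hAB : ∀ a ∈ A, ∀ b ∈ B, b < a) :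
    ∃ k ≤ m, (∀ x, x ∈ B ↔ s ≤ x ∧ x < s + k) ∧ (∀ x, x ∈ A ↔ s + k ≤ x ∧ x < s + k + (m - k)) := by
  rcases B.eq_empty_or_nonempty with rfl | hB
  · refine ⟨0, by omega, ?_, ?_⟩
    · simp
    · simp at h
      intro x; rw [h]; omega
  · have hM := B.max'_mem hB
    have hle := fun x hx => B.le_max' x hx
    set M := B.max' hB
    have hMs := (h M).1 (Or.inr hM)
    have hBi : ∀ x, x ∈ B ↔ s ≤ x ∧ x < s + (M + 1 - s) := by
      intro x
      constructor
      · intro hx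
        have := hle x hx
        have := (h x).1 (Or.inr hx)
        omega
      · intro hx
        rcases (h x).2 (by omega) with h1 | h1
        · have := hAB x h1 M hM; omega
        · exact h1
    refine ⟨M + 1 - s, by omega, hBi, ?_⟩
    intro x
    constructor
    · intro hx
      have := hAB x hx M hM
      have := (h x).1 (Or.inl hx)
      omega
    · intro hx
      rcases (h x).2 (by omega) with h1 | h1
      · exact h1
      · have := hle x h1; omega

lemma enc_surj_s8 (n : ℕ) : ∀ (s : ℕ) (l : List ℕ), l.Nodup → (∀ x, x ∈ l ↔ s ≤ x ∧ x < s + n) →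
    l.Triplewise R132 → ∃ t : BinaryTree Unit, t.numNodes = n ∧ enc t s = l := by
  induction n using Nat.strong_induction_on with
  | _ n ih =>
    intro s l hnd hmem hav
    cases n with
    | zero =>
      refine ⟨.nil, rfl, ?_⟩
      simp only [enc]
      symm
      rw [List.eq_nil_iff_forall_not_mem]
      intro x hx
      have := (hmem x).1 hx
      omega
    | succ m =>
      obtain ⟨L, R, rfl⟩ := List.append_of_mem ((hmem (s + m)).2 (by omega))
      simp only [List.triplewise_append, List.triplewise_cons, List.pairwise_cons] at hav
      simp only [List.nodup_append, List.nodup_cons, List.mem_cons] at hnd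
      obtain ⟨hL, ⟨hR1, hR⟩, hLR, -⟩ := hav
      obtain ⟨nL, ⟨nm, nR⟩, nLR⟩ := hnd
      simp only [List.mem_append, List.mem_cons] at hmem
      have hAB : ∀ a ∈ L.toFinset, ∀ b ∈ R.toFinset, b < a := by
        intro a ha b hb
        simp only [List.mem_toFinset] at ha hb
        have h1 := (hLR a ha).1 b hb
        have h2 := nLR a ha b (Or.inr hb)
        have h3 := (hmem b).1 (Or.inr (Or.inr hb))
        have h4 : b ≠ s + m := by rintro rfl; exact nm hb
        unfold R132 at h1
        omega
      obtain ⟨k, hk, h1, h2⟩ := cut_lemma s m L.toFinset R.toFinset (by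
        intro x
        simp only [List.mem_toFinset]
        constructor
        · rintro (hx | hx)
          · have h3 := (hmem x).1 (Or.inl hx)
            have h4 := nLR x hx _ (Or.inl rfl)
            omega
          · have h3 := (hmem x).1 (Or.inr (Or.inr hx))
            have h4 : x ≠ s + m := by rintro rfl; exact nm hx
            omega
        · intro hx
          rcases (hmem x).2 (by omega) with h | h | h
          · exact Or.inl h
          · omega
          · exact Or.inr h) hAB
      simp only [List.mem_toFinset] at h1 h2
      obtain ⟨r, hr, rfl⟩ := ih k (by omega) s R nR h1 hR
      obtain ⟨l, hl, rfl⟩ := ih (m - k) (by omega) (s + k) L nL h2 hL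
      refine ⟨.node () l r, ?_, ?_⟩
      · simp only [BinaryTree.numNodes]; omega
      · simp only [enc, hr, hl]
        congr 2
        omega

/-- One-line notation as a list of naturals. -/
def oneLine {n : ℕ} (π : Equiv.Perm (Fin n)) : List ℕ := List.ofFn fun i => (π i : ℕ)

lemma oneLine_inj {n : ℕ} : Function.Injective (oneLine (n := n)) := by
  intro π σ h
  have := List.ofFn_injective h
  ext i
  exact congrFun this i

lemma oneLine_mem {n : ℕ} (π : Equiv.Perm (Fin n)) (x : ℕ) : x ∈ oneLine π ↔ 0 ≤ x ∧ x < 0 + n := by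
  simp only [oneLine, List.mem_ofFn]
  constructor
  · rintro ⟨i, rfl⟩; simp
  · intro h
    exact ⟨π.symm ⟨x, by omega⟩, by simp⟩

lemma oneLine_nodup {n : ℕ} (π : Equiv.Perm (Fin n)) : (oneLine π).Nodup := by
  rw [oneLine, List.nodup_ofFn]
  exact Fin.val_injective.comp π.injective

lemma oneLine_surj {n : ℕ} (l : List ℕ) (h : l.Nodup) (hlen : l.length = n)
    (hm : ∀ x ∈ l, x < n) : ∃ π : Equiv.Perm (Fin n), oneLine π = l := by
  subst hlen
  let f : Fin l.length → Fin l.length := fun i => ⟨l.get i, hm _ (List.get_mem _ _)⟩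
  have hf : Function.Injective f := by
    intro i j hij
    simp only [f, Fin.mk.injEq] at hij
    exact List.nodup_iff_injective_get.1 h hij
  refine ⟨Equiv.ofBijective f (Finite.injective_iff_bijective.1 hf), ?_⟩
  simp only [oneLine, Equiv.ofBijective_apply, f]
  exact List.ofFn_get l

lemma oneLine_av {n : ℕ} (π : Equiv.Perm (Fin n)) :
    (oneLine π).Triplewise R132 ↔ Avoids132 π := by
  rw [List.triplewise_iff_getElem]
  simp only [oneLine, List.getElem_ofFn, List.length_ofFn, R132, Avoids132]
  constructor
  · rintro h ⟨a, b, c, h1, h2, h3, h4⟩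
    exact h a b c h1 h2 c.2 ⟨h3, h4⟩
  · intro h i j k hij hjk hk h'
    exact h ⟨⟨i, by omega⟩, ⟨j, by omega⟩, ⟨k, hk⟩, hij, hjk, h'.1, h'.2⟩

lemma oneLine_iso {n : ℕ} (π : Equiv.Perm (Fin n)) (i : Fin n) :
    Iso (oneLine π) (π i) ↔ ∀ a b : Fin n, a < b → (a = i ∨ b = i) → ¬ π a < π b := by
  rw [Iso, oneLine, List.pairwise_ofFn]
  simp only [Fin.val_inj, EmbeddingLike.apply_eq_iff_eq, Fin.val_fin_lt]

lemma hat_iff {n : ℕ} (π : Equiv.Perm (Fin n)) :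
    AvoidsHat (1 : Equiv.Perm (Fin 2)) 0 π ↔
      ∀ i : Fin n, ∃ a b : Fin n, a < b ∧ (a = i ∨ b = i) ∧ π a < π b := by
  constructor
  · intro h i
    obtain ⟨g, ⟨h1, h2⟩, h3⟩ := h (fun _ => i) (Subsingleton.strictMono _) (by
      intro a b; simp [Subsingleton.elim a b])
    refine ⟨g 0, g 1, h1 (by decide), ?_, (h2 0 1).1 (by decide)⟩
    obtain ⟨k, hk⟩ := h3 ⟨0, rfl⟩
    fin_cases k
    · exact Or.inl hk
    · exact Or.inr hk
  · intro h g hg _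
    obtain ⟨a, b, hab, hi, hp⟩ := h (g 0)
    refine ⟨![a, b], ⟨?_, ?_⟩, ?_⟩
    · intro x y hxy
      fin_cases x <;> fin_cases y <;> simp_all
    · intro x y
      fin_cases x <;> fin_cases y <;> simp [hp, hp.le]
    · rintro _ ⟨k, rfl⟩
      rw [Subsingleton.elim k 0]
      rcases hi with h | h
      · exact ⟨0, h⟩
      · exact ⟨1, h⟩

lemma oneLine_good {n : ℕ} (π : Equiv.Perm (Fin n)) :
    (∀ x ∈ oneLine π, ¬ Iso (oneLine π) x) ↔ AvoidsHat (1 : Equiv.Perm (Fin 2)) 0 π := by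
  rw [hat_iff]
  constructor
  · intro h i
    have := h (π i) (by rw [oneLine_mem]; simp)
    rw [oneLine_iso] at this
    push Not at this
    exact this
  · intro h x hx
    rw [oneLine_mem] at hx
    obtain ⟨i, hi⟩ := π.surjective ⟨x, by omega⟩
    have hxi : x = (π i : ℕ) := by rw [hi]
    rw [hxi, oneLine_iso]
    push Not
    exact h i

lemma card_perm (n : ℕ) : Nat.card {π : Equiv.Perm (Fin n) |
        Avoids132 π ∧ AvoidsHat (1 : Equiv.Perm (Fin 2)) 0 π} = Nat.card (goodSet n) := by
  have hi : Function.Injective (fun t => enc t 0) := fun t t' h => enc_inj t t' 0 h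
  rw [Nat.card_coe_set_eq, Nat.card_coe_set_eq, ← Set.ncard_image_of_injective _ hi,
    ← Set.ncard_image_of_injective _ oneLine_inj]
  congr 1
  ext w
  constructor
  · rintro ⟨π, ⟨h1, h2⟩, rfl⟩
    obtain ⟨t, ht, he⟩ := enc_surj_s8 n 0 _ (oneLine_nodup π) (oneLine_mem π) ((oneLine_av π).2 h1)
    refine ⟨t, ⟨ht, ?_⟩, he⟩
    rw [← enc_good t 0, he]
    exact (oneLine_good π).2 h2
  · rintro ⟨t, ⟨ht, hg⟩, rfl⟩
    obtain ⟨π, hπ⟩ := oneLine_surj (n := n) (enc t 0) (enc_nodup t 0) (by rw [enc_length, ht]) (by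
      intro x hx; rw [enc_mem] at hx; omega)
    refine ⟨π, ⟨?_, ?_⟩, hπ⟩
    · rw [← oneLine_av, hπ]; exact enc_av t 0
    · rw [← oneLine_good, hπ]; exact (enc_good t 0).2 hg

/-- Dyck word of a tree. -/
def dk : BinaryTree Unit → List Bool
  | .nil => []
  | .node _ l r => true :: (dk l ++ false :: dk r)

lemma dk_count (t : BinaryTree Unit) :
    (dk t).count true = t.numNodes ∧ (dk t).count false = t.numNodes := by
  induction t with
  | nil => simp [dk]
  | node u l r ihl ihr =>
    simp [dk, BinaryTree.numNodes, ihl, ihr]; omega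

/-- Step conversion. -/
def stepB : DyckStep → Bool
  | .U => true
  | .D => false

/-- Step conversion. -/
def stepD : Bool → DyckStep
  | true => .U
  | false => .D

lemma stepB_inj : Function.Injective stepB := by
  intro a b; cases a <;> cases b <;> simp [stepB]

lemma stepD_inj : Function.Injective stepD := by
  intro a b; cases a <;> cases b <;> simp [stepD]

lemma dk_eq (t : BinaryTree Unit) : dk t = (DyckWord.ofTree t).toList.map stepB := by
  induction t with
  | nil => rfl
  | node u l r ihl ihr =>
    have : (DyckWord.ofTree (.node u l r)).toList
      = ([DyckStep.U] ++ (DyckWord.ofTree l).toList ++ [DyckStep.D]) ++ (DyckWord.ofTree r).toList := rfl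
    rw [this]
    simp [dk, ihl, ihr, stepB]

lemma dk_prefix_take (t : BinaryTree Unit) (i : ℕ) :
    ((dk t).take i).count false ≤ ((dk t).take i).count true := by
  have h := (DyckWord.ofTree t).count_D_le_count_U i
  rw [dk_eq, ← List.map_take]
  have h1 := List.count_map_of_injective ((DyckWord.ofTree t).toList.take i) stepB stepB_inj .U
  have h2 := List.count_map_of_injective ((DyckWord.ofTree t).toList.take i) stepB stepB_inj .D
  simp only [stepB] at h1 h2
  omega

lemma dk_prefix (t : BinaryTree Unit) (x y : List Bool) (h : dk t = x ++ y) :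
    x.count false ≤ x.count true := by
  have := dk_prefix_take t x.length
  simpa [h] using this

lemma dk_isDyck (t : BinaryTree Unit) : IsDyckPath t.numNodes (dk t) := by
  refine ⟨?_, (dk_count t).1, dk_prefix_take t⟩
  have := List.count_true_add_count_false (dk t)
  have := dk_count t
  omega

lemma dk_inj : Function.Injective dk := by
  intro a b h
  rw [dk_eq, dk_eq] at h
  have h2 := List.map_injective_iff.2 stepB_inj h
  have h3 : DyckWord.ofTree a = DyckWord.ofTree b := DyckWord.ext h2
  rw [← DyckWord.toTree_ofTree a, h3, DyckWord.toTree_ofTree]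

lemma dk_surj (n : ℕ) (w : List Bool) (h : IsDyckPath n w) : ∃ t, dk t = w := by
  obtain ⟨h1, h2, h3⟩ := h
  have ht := fun l : List Bool => List.count_map_of_injective l stepD stepD_inj true
  have hf := fun l : List Bool => List.count_map_of_injective l stepD stepD_inj false
  simp only [stepD] at ht hf
  let p : DyckWord := ⟨w.map stepD, by
    have := List.count_true_add_count_false w
    rw [ht, hf]; omega, by
    intro i
    rw [← List.map_take, ht, hf]; exact h3 i⟩
  refine ⟨p.toTree, ?_⟩
  rw [dk_eq, DyckWord.ofTree_toTree]
  simp only [p, List.map_map]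
  have : stepB ∘ stepD = id := by funext b; cases b <;> rfl
  simp [this]

lemma hasPeak_iff_s8 (w : List Bool) : HasPeakAtHeight w 1 ↔
    ∃ x y, w = x ++ true :: false :: y ∧ x.count true = x.count false := by
  constructor
  · rintro ⟨q, hq, h1, h2, h3⟩
    rw [List.getD_eq_getElem _ _ (by omega)] at h1 h2
    have e : w.drop q = true :: false :: w.drop (q + 2) := by
      rw [List.drop_eq_getElem_cons (by omega), List.drop_eq_getElem_cons (by omega), h1, h2]
    refine ⟨w.take q, w.drop (q + 2), ?_, ?_⟩
    · rw [← e, List.take_append_drop]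
    · rw [List.take_succ_eq_append_getElem (by omega), h1] at h3
      simp at h3
      omega
  · rintro ⟨x, y, rfl, h⟩
    refine ⟨x.length, by simp, by simp, by simp, ?_⟩
    rw [List.take_append, List.take_of_length_le (by omega)]
    simp [h]

lemma dk_peak_node (u : Unit) (l r : BinaryTree Unit) :
    HasPeakAtHeight (dk (.node u l r)) 1 ↔ l = .nil ∨ HasPeakAtHeight (dk r) 1 := by
  rw [hasPeak_iff_s8, hasPeak_iff_s8]
  have hl := dk_count l
  constructor
  · rintro ⟨x, y, h, hb⟩
    cases x with
    | nil =>
      left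
      simp [dk] at h
      cases l with
      | nil => rfl
      | node u a b => simp [dk] at h
    | cons c x =>
      simp only [dk, List.cons_append, List.cons.injEq] at h
      obtain ⟨rfl, h⟩ := h
      simp at hb
      rw [List.append_eq_append_iff] at h
      rcases h with ⟨a, h1, h2⟩ | ⟨a, h1, h2⟩
      · cases a with
        | nil => simp at h2
        | cons d a =>
          simp at h2
          obtain ⟨rfl, h2⟩ := h2
          refine Or.inr ⟨a, y, h2, ?_⟩
          subst h1
          simp at hb
          omega
      · have := dk_prefix l x a h1
        omega
  · rintro (rfl | ⟨x, y, h, hb⟩)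
    · exact ⟨[], dk r, by simp [dk], by simp⟩
    · refine ⟨true :: (dk l ++ false :: x), y, by simp [dk, h], ?_⟩
      simp
      omega

lemma dk_good (t : BinaryTree Unit) : ¬ HasPeakAtHeight (dk t) 1 ↔ goodTree t = true := by
  induction t with
  | nil => simp [dk, goodTree, hasPeak_iff_s8]
  | node u l r ihl ihr => rw [dk_peak_node, goodTree_node, ← ihr]; tauto

lemma card_dyck (n : ℕ) :
    Nat.card {w : List Bool | IsDyckPath n w ∧ ¬ HasPeakAtHeight w 1} = Nat.card (goodSet n) := by
  symm
  rw [Nat.card_coe_set_eq, Nat.card_coe_set_eq, ← Set.ncard_image_of_injective _ dk_inj]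
  congr 1
  ext w
  constructor
  · rintro ⟨t, ⟨rfl, hg⟩, rfl⟩
    exact ⟨dk_isDyck t, (dk_good t).2 hg⟩
  · rintro ⟨h1, h2⟩
    obtain ⟨t, rfl⟩ := dk_surj n w h1
    refine ⟨t, ⟨?_, (dk_good t).1 h2⟩, rfl⟩
    rw [← (dk_count t).1]; exact h1.2.1

/-- Corollary `Fin`. For every `n ≥ 1`, `|S_n(132, 1̂2)|` equals the `n`-th
Fine number `F_n` (where `F_0 = 1`, `F_1 = 0` and `C_m = 2·F_m + F_{m−1}` for `m ≥ 1`, `C_m`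
being the `m`-th Catalan number); equivalently, it equals the number of Dyck `n`-paths with no
peak at height `1`. -/
theorem stmt8 (n : ℕ) (hn : 1 ≤ n) (F : ℕ → ℕ) (hF0 : F 0 = 1) (hF1 : F 1 = 0)
    (hFrec : ∀ m : ℕ, 1 ≤ m → catalan m = 2 * F m + F (m - 1)) :
    Nat.card {π : Equiv.Perm (Fin n) |
        Avoids132 π ∧ AvoidsHat (1 : Equiv.Perm (Fin 2)) 0 π} = F n ∧
    Nat.card {π : Equiv.Perm (Fin n) |
        Avoids132 π ∧ AvoidsHat (1 : Equiv.Perm (Fin 2)) 0 π}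
      = Nat.card {w : List Bool | IsDyckPath n w ∧ ¬ HasPeakAtHeight w 1} := by
  rw [card_perm, card_dyck, card_goodSet]
  exact ⟨goodCount_eq F hF0 hFrec n, rfl⟩
end

section
/- For every integer n ≥ 1, the number of permutations of length n avoiding 132 and avoiding the hatted pattern 1̂23 equals the (n−1)-th Catalan number; in particular |S_n(132, 1̂23)| = |S_{n−1}(132)|. -/
open BinaryTree in
/-- `T` is the decreasing-max decomposition of `f` on `[s, s+|T|)` with values in `[v, v+|T|)`. -/
def TRep : BinaryTree Unit → (ℕ → ℕ) → ℕ → ℕ → Prop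
  | .nil, _, _, _ => True
  | .node _ l r, f, s, v => f (s + l.numNodes) = v + l.numNodes + r.numNodes ∧
      TRep l f s (v + r.numNodes) ∧ TRep r f (s + l.numNodes + 1) v

def AvI (f : ℕ → ℕ) (s n : ℕ) : Prop :=
  ∀ i j k, s ≤ i → i < j → j < k → k < s + n → ¬ (f i < f k ∧ f k < f j)

def HatI (f : ℕ → ℕ) (s n : ℕ) : Prop :=
  ∀ i j, s ≤ i → i < j → j < s + n → f i < f j → ∃ k, s ≤ k ∧ k < s + n ∧
    ((k < i ∧ f k < f i) ∨ (i < k ∧ k < j ∧ f i < f k ∧ f k < f j) ∨ (j < k ∧ f j < f k))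

def CovI (f : ℕ → ℕ) (s n : ℕ) : Prop :=
  ∀ i, s ≤ i → i < s + n → ∃ j, s ≤ j ∧ j < s + n ∧
    ((i < j ∧ f i < f j) ∨ (j < i ∧ f j < f i))

def CovT : BinaryTree Unit → Prop
  | .nil => True
  | .node _ l r => l.numNodes ≠ 0 ∧ CovT r

def HatT : BinaryTree Unit → Prop
  | .nil => True
  | .node _ l r => CovT l ∧ HatT r

theorem TRep.range {T : BinaryTree Unit} : ∀ {f : ℕ → ℕ} {s v : ℕ}, TRep T f s v →
    ∀ i, s ≤ i → i < s + T.numNodes → v ≤ f i ∧ f i < v + T.numNodes := by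
  induction T with
  | nil => intro f s v _ i h1 h2; simp [BinaryTree.numNodes] at h2; omega
  | node a l r ihl ihr =>
    rintro f s v ⟨h0, hl, hr⟩ i h1 h2
    simp only [BinaryTree.numNodes] at h2 ⊢
    rcases lt_trichotomy i (s + l.numNodes) with h | h | h
    · have := ihl hl i h1 h; omega
    · subst h; omega
    · have := ihr hr i (by omega) (by omega); omega

theorem TRep.inj {T : BinaryTree Unit} : ∀ {f : ℕ → ℕ} {s v : ℕ}, TRep T f s v →
    ∀ i j, s ≤ i → i < j → j < s + T.numNodes → f i ≠ f j := by
  induction T with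
  | nil => intro f s v _ i j h1 h2 h3; simp [BinaryTree.numNodes] at h3; omega
  | node a l r ihl ihr =>
    rintro f s v ⟨h0, hl, hr⟩ i j h1 h2 h3
    simp only [BinaryTree.numNodes] at h3
    have rl := hl.range
    have rr := hr.range
    rcases lt_trichotomy i (s + l.numNodes) with h | h | h
    · have := rl i h1 h
      rcases lt_trichotomy j (s + l.numNodes) with h' | h' | h'
      · exact ihl hl i j h1 h2 h'
      · subst h'; omega
      · have := rr j (by omega) (by omega); omega
    · subst h
      have := rr j (by omega) (by omega); omega
    · exact ihr hr i j (by omega) h2 (by omega)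

theorem TRep.av {T : BinaryTree Unit} : ∀ {f : ℕ → ℕ} {s v : ℕ}, TRep T f s v →
    AvI f s T.numNodes := by
  induction T with
  | nil => intro f s v _ i j k h1 h2 h3 h4; simp [BinaryTree.numNodes] at h4; omega
  | node a l r ihl ihr =>
    rintro f s v ⟨h0, hl, hr⟩ i j k h1 h2 h3 h4
    simp only [BinaryTree.numNodes] at h4
    have rl := hl.range
    have rr := hr.range
    rcases lt_trichotomy i (s + l.numNodes) with h | h | h
    · have := rl i h1 h
      rcases lt_trichotomy k (s + l.numNodes) with h' | h' | h'
      · exact ihl hl i j k h1 h2 h3 h'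
      · have := rl j (by omega) (by omega)
        subst h'; omega
      · have := rr k (by omega) (by omega); omega
    · subst h
      have := rr k (by omega) (by omega); omega
    · exact ihr hr i j k (by omega) h2 h3 (by omega)

theorem TRep.congr {T : BinaryTree Unit} : ∀ {f g : ℕ → ℕ} {s v : ℕ}, TRep T f s v →
    (∀ i, s ≤ i → i < s + T.numNodes → f i = g i) → TRep T g s v := by
  induction T with
  | nil => intros; trivial
  | node a l r ihl ihr =>
    rintro f g s v ⟨h0, hl, hr⟩ h
    simp only [BinaryTree.numNodes] at h
    refine ⟨?_, ihl hl fun i h1 h2 => h i h1 (by omega),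
      ihr hr fun i h1 h2 => h i (by omega) (by omega)⟩
    rw [← h _ (by omega) (by omega), h0]

theorem TRep.exists (T : BinaryTree Unit) : ∀ (s v : ℕ), ∃ f, TRep T f s v := by
  induction T with
  | nil => intro s v; exact ⟨id, trivial⟩
  | node a l r ihl ihr =>
    intro s v
    obtain ⟨f, hf⟩ := ihl s (v + r.numNodes)
    obtain ⟨g, hg⟩ := ihr (s + l.numNodes + 1) v
    refine ⟨fun i => if i < s + l.numNodes then f i else
      if i = s + l.numNodes then v + l.numNodes + r.numNodes else g i, ?_, ?_, ?_⟩
    · simp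
    · exact hf.congr fun i h1 h2 => by simp [h2]
    · refine hg.congr fun i h1 h2 => ?_
      rw [if_neg (by omega), if_neg (by omega)]

theorem TRep.unique {T : BinaryTree Unit} : ∀ {T' : BinaryTree Unit} {f : ℕ → ℕ} {s v : ℕ},
    TRep T f s v → TRep T' f s v → T.numNodes = T'.numNodes → T = T' := by
  induction T with
  | nil =>
    intro T' f s v _ _ h
    cases T' with
    | nil => rfl
    | node a l r => simp [BinaryTree.numNodes] at h
  | node a l r ihl ihr =>
    intro T' f s v h h' hn
    cases T' with
    | nil => simp [BinaryTree.numNodes] at hn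
    | node a' l' r' =>
      have hi := h.inj
      obtain ⟨h0, hl, hr⟩ := h
      obtain ⟨h0', hl', hr'⟩ := h'
      simp only [BinaryTree.numNodes] at hn hi
      have e : l.numNodes = l'.numNodes := by
        rcases lt_trichotomy l.numNodes l'.numNodes with h | h | h
        · exact absurd (by omega) (hi (s + l.numNodes) (s + l'.numNodes)
            (by omega) (by omega) (by omega))
        · exact h
        · exact absurd (by omega) (hi (s + l'.numNodes) (s + l.numNodes)
            (by omega) (by omega) (by omega))
      have e' : r.numNodes = r'.numNodes := by omega
      rw [← e'] at hl'
      rw [← e] at hr'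
      rw [ihl hl hl' e, ihr hr hr' e']

theorem TRep.fun_unique {T : BinaryTree Unit} : ∀ {f g : ℕ → ℕ} {s v : ℕ},
    TRep T f s v → TRep T g s v → ∀ i, s ≤ i → i < s + T.numNodes → f i = g i := by
  induction T with
  | nil => intro f g s v _ _ i h1 h2; simp [BinaryTree.numNodes] at h2; omega
  | node a l r ihl ihr =>
    rintro f g s v ⟨h0, hl, hr⟩ ⟨h0', hl', hr'⟩ i h1 h2
    simp only [BinaryTree.numNodes] at h2
    rcases lt_trichotomy i (s + l.numNodes) with h | h | h
    · exact ihl hl hl' i h1 h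
    · subst h; omega
    · exact ihr hr hr' i (by omega) (by omega)

theorem TRep.cov {T : BinaryTree Unit} : ∀ {f : ℕ → ℕ} {s v : ℕ}, TRep T f s v →
    (CovI f s T.numNodes ↔ CovT T) := by
  induction T with
  | nil =>
    intro f s v _
    simp only [CovT, iff_true]
    intro i h1 h2; simp [BinaryTree.numNodes] at h2; omega
  | node a l r ihl ihr =>
    rintro f s v ⟨h0, hl, hr⟩
    have rl := hl.range
    have rr := hr.range
    simp only [CovT, BinaryTree.numNodes]
    rw [← ihr hr]
    constructor
    · intro h
      constructor
      · intro hz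
        obtain ⟨j, h1, h2, h3⟩ := h (s + l.numNodes) (by omega) (by omega)
        have := rr j (by omega) (by omega)
        omega
      · intro i h1 h2
        have := rr i h1 h2
        obtain ⟨j, h3, h4, h5⟩ := h i (by omega) (by omega)
        refine ⟨j, ?_, by omega, h5⟩
        by_contra hc
        rcases lt_or_eq_of_le (show j ≤ s + l.numNodes by omega) with h | h
        · have := rl j h3 h; omega
        · subst h; omega
    · rintro ⟨h0', h⟩ i h1 h2
      rcases lt_trichotomy i (s + l.numNodes) with h' | h' | h'
      · have := rl i h1 h'
        exact ⟨s + l.numNodes, by omega, by omega, by omega⟩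
      · have := rl s (by omega) (by omega)
        subst h'
        exact ⟨s, by omega, by omega, by omega⟩
      · obtain ⟨j, h3, h4, h5⟩ := h i (by omega) (by omega)
        exact ⟨j, by omega, by omega, h5⟩

theorem TRep.hat {T : BinaryTree Unit} : ∀ {f : ℕ → ℕ} {s v : ℕ}, TRep T f s v →
    (HatI f s T.numNodes ↔ HatT T) := by
  induction T with
  | nil =>
    intro f s v _
    simp only [HatT, iff_true]
    intro i j h1 h2 h3; simp [BinaryTree.numNodes] at h3; omega
  | node a l r ihl ihr =>
    rintro f s v ⟨h0, hl, hr⟩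
    have rl := hl.range
    have rr := hr.range
    simp only [HatT, BinaryTree.numNodes]
    rw [← ihr hr, ← hl.cov]
    constructor
    · intro h
      constructor
      · intro i h1 h2
        have := rl i h1 h2
        obtain ⟨k, h3, h4, h5⟩ := h i (s + l.numNodes) (by omega) (by omega) (by omega) (by omega)
        have hk : k < s + l.numNodes := by
          by_contra hc
          have := rr k (by omega) (by omega)
          omega
        exact ⟨k, h3, hk, by omega⟩
      · intro i j h1 h2 h3 h4
        have := rr i h1 (by omega)
        have := rr j (by omega) h3
        obtain ⟨k, h5, h6, h7⟩ := h i j (by omega) (by omega) (by omega) h4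
        refine ⟨k, ?_, by omega, h7⟩
        by_contra hc
        rcases lt_or_eq_of_le (show k ≤ s + l.numNodes by omega) with h | h
        · have := rl k h5 h; omega
        · subst h; omega
    · rintro ⟨hc, hh⟩ i j h1 h2 h3 h4
      rcases lt_trichotomy j (s + l.numNodes) with h' | h' | h'
      · have := rl j (by omega) (by omega)
        exact ⟨s + l.numNodes, by omega, by omega, by omega⟩
      · subst h'
        obtain ⟨k, h5, h6, h7⟩ := hc i h1 h2
        have := rl k h5 h6
        exact ⟨k, h5, by omega, by omega⟩
      · have := rr j (by omega) (by omega)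
        have hi : s + l.numNodes < i := by
          by_contra hc
          rcases lt_or_eq_of_le (show i ≤ s + l.numNodes by omega) with h | h
          · have := rl i h1 h; omega
          · subst h; omega
        obtain ⟨k, h5, h6, h7⟩ := hh i j (by omega) h2 (by omega) h4
        exact ⟨k, by omega, by omega, h7⟩

/-- pigeonhole on intervals -/
theorem interval_card {f : ℕ → ℕ} {a b c d : ℕ}
    (hr : ∀ i, a ≤ i → i < b → c ≤ f i ∧ f i < d)
    (hi : ∀ i j, a ≤ i → i < j → j < b → f i ≠ f j) : b - a ≤ d - c := by
  have := Finset.card_le_card_of_injOn (s := Finset.Ico a b) (t := Finset.Ico c d) f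
    (by intro i h; simp at h ⊢; exact hr i h.1 h.2)
    (by
      intro i h j h' e
      simp at h h'
      rcases lt_trichotomy i j with q | q | q
      · exact absurd e (hi i j h.1 q h'.2)
      · exact q
      · exact absurd e.symm (hi j i h'.1 q h.2))
  simpa using this

theorem TRep.of_av (n : ℕ) : ∀ (f : ℕ → ℕ) (s v : ℕ),
    (∀ i, s ≤ i → i < s + n → v ≤ f i ∧ f i < v + n) →
    (∀ i j, s ≤ i → i < j → j < s + n → f i ≠ f j) → AvI f s n →
    ∃ T : BinaryTree Unit, T.numNodes = n ∧ TRep T f s v := by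
  induction n using Nat.strong_induction_on with
  | _ n ih =>
    intro f s v hr hi ha
    rcases n with _ | n
    · exact ⟨.nil, rfl, trivial⟩
    obtain ⟨m, hm1, hm2, hm⟩ : ∃ m, s ≤ m ∧ m < s + (n + 1) ∧ f m = v + n := by
      by_contra hc
      push Not at hc
      have := interval_card (f := f) (a := s) (b := s + (n + 1)) (c := v) (d := v + n)
        (fun i h1 h2 => by have := hr i h1 h2; have := hc i h1 h2; omega) hi
      omega
    obtain ⟨p, rfl⟩ := Nat.exists_eq_add_of_le hm1
    obtain ⟨q, rfl⟩ := Nat.exists_eq_add_of_le (show p ≤ n by omega)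
    have cross : ∀ i k, s ≤ i → i < s + p → s + p < k → k < s + (p + q + 1) → f k < f i := by
      intro i k h1 h2 h3 h4
      have h5 := ha i (s + p) k h1 h2 h3 h4
      have h6 := hi i k h1 (by omega) h4
      have h7 := hi (s + p) k (by omega) h3 h4
      have := hr k (by omega) h4
      omega
    obtain ⟨l, hl, rl⟩ := ih p (by omega) f s (v + q)
      (fun i h1 h2 => by
        have c := interval_card (f := f) (a := s + p + 1) (b := s + (p + q + 1)) (c := v) (d := f i)
          (fun k h3 h4 => ⟨(hr k (by omega) h4).1, cross i k h1 h2 (by omega) h4⟩)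
          (fun j k h3 h4 h5 => hi j k (by omega) h4 h5)
        have := hr i h1 (by omega)
        have := hi i (s + p) h1 h2 (by omega)
        omega)
      (fun i j h1 h2 h3 => hi i j h1 h2 (by omega))
      (fun i j k h1 h2 h3 h4 => ha i j k h1 h2 h3 (by omega))
    obtain ⟨r, hr', rr⟩ := ih q (by omega) f (s + p + 1) v
      (fun k h1 h2 => by
        have hk := hr k (by omega) (by omega)
        have hne := hi (s + p) k (by omega) (by omega) (by omega)
        have c := interval_card (f := f) (a := s) (b := s + p + 1) (c := f k + 1)
          (d := v + (p + q + 1))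
          (fun i h3 h4 => by
            have := hr i h3 (by omega)
            rcases lt_or_eq_of_le (show i ≤ s + p by omega) with h | h
            · have := cross i k h3 h (by omega) (by omega); omega
            · subst h; omega)
          (fun i j h3 h4 h5 => hi i j (by omega) h4 (by omega))
        omega)
      (fun i j h1 h2 h3 => hi i j (by omega) h2 (by omega))
      (fun i j k h1 h2 h3 h4 => ha i j k (by omega) h2 h3 (by omega))
    refine ⟨.node () l r, by simp [BinaryTree.numNodes, hl, hr'], ?_, ?_, ?_⟩
    · rw [hl, hr', hm]; omega
    · rw [hr']; exact rl
    · rw [hl]; exact rr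

section counting
open Classical Finset BinaryTree

noncomputable def cnt (P : BinaryTree Unit → Prop) (n : ℕ) : ℕ :=
  #((treesOfNumNodesEq n).filter P)

theorem cnt_succ {P Q R : BinaryTree Unit → Prop} (h : ∀ l r, P (.node () l r) ↔ Q l ∧ R r)
    (n : ℕ) : cnt P (n + 1) = ∑ ij ∈ antidiagonal n, cnt Q ij.1 * cnt R ij.2 := by
  unfold cnt
  rw [treesOfNumNodesEq_succ, filter_biUnion, card_biUnion]
  · apply sum_congr rfl
    rintro ⟨i, j⟩ H
    rw [filter_map, card_map, ← card_product, ← filter_product]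
    congr 1
    ext ⟨x, y⟩
    have := h x y
    simp only [mem_filter, mem_product, Function.comp]
    exact and_congr_right fun _ => this
  · simp_rw [Set.PairwiseDisjoint, Set.Pairwise, disjoint_left]
    aesop

theorem cnt_congr {P Q : BinaryTree Unit → Prop} {n : ℕ}
    (h : ∀ x ∈ treesOfNumNodesEq n, (P x ↔ Q x)) : cnt P n = cnt Q n := by
  unfold cnt
  rw [filter_congr h]

theorem cnt_zero {P : BinaryTree Unit → Prop} (h : P .nil) : cnt P 0 = 1 := by
  unfold cnt
  simp [filter_singleton, h]

theorem cnt_true (n : ℕ) : cnt (fun _ => True) n = catalan n := by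
  unfold cnt
  rw [← treesOfNumNodesEq_card_eq_catalan]
  simp

open PowerSeries in
theorem cnt_series {P Q R : BinaryTree Unit → Prop} (h : ∀ l r, P (.node () l r) ↔ Q l ∧ R r)
    (h0 : P .nil) : (PowerSeries.mk fun n => (cnt P n : ℤ)) =
      1 + X * ((PowerSeries.mk fun n => (cnt Q n : ℤ)) * (PowerSeries.mk fun n => (cnt R n : ℤ))) := by
  ext n
  rcases n with _ | n
  · simp [cnt_zero h0]
  · rw [map_add, coeff_succ_X_mul, coeff_mul, coeff_mk, cnt_succ h]
    simp [coeff_one]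

open PowerSeries in
theorem cnt_hat (n : ℕ) : cnt HatT (n + 1) = catalan n := by
  have hA := cnt_series (P := HatT) (Q := CovT) (R := HatT) (fun _ _ => Iff.rfl) trivial
  have hB := cnt_series (P := CovT) (Q := fun t => t.numNodes ≠ 0) (R := CovT)
    (fun _ _ => Iff.rfl) trivial
  have hC := cnt_series (P := fun _ => True) (Q := fun _ => True) (R := fun _ => True)
    (fun _ _ => by simp) trivial
  have hD : (PowerSeries.mk fun n => (cnt (fun t => t.numNodes ≠ 0) n : ℤ)) =
      (PowerSeries.mk fun n => (cnt (fun _ => True) n : ℤ)) - 1 := by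
    ext n
    rcases n with _ | n
    · simp [cnt_zero]
      simp [cnt, numNodes]
    · simp only [coeff_mk, map_sub, coeff_one]
      have e : ∀ x ∈ treesOfNumNodesEq (n + 1), (x.numNodes ≠ 0 ↔ True) := by
        intro x hx
        rw [mem_treesOfNumNodesEq] at hx
        simp [hx]
      rw [cnt_congr e]
      simp
  rw [hD] at hB
  generalize hAe : (PowerSeries.mk fun n => (cnt HatT n : ℤ)) = A at *
  generalize (PowerSeries.mk fun n => (cnt CovT n : ℤ)) = B at *
  generalize hCe : (PowerSeries.mk fun n => (cnt (fun _ => True) n : ℤ)) = C at *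
  -- U = 1 + X - X C, B U = 1, A (1 - X B) = 1
  have key : A = 1 + X * C := by
    have hU : B * (1 + X - X * C) = 1 := by linear_combination hB
    have hV : A * (1 - X * B) = 1 := by linear_combination hA
    have hW : (1 + X * C) * (1 - X * B) = 1 := by
      have : (1 + X * C) * (1 - X * B) * (1 + X - X * C) = 1 + X - X * C := by
        linear_combination (-(1 + X * C) * X) * hU + X * hC
      linear_combination B * this + (1 - (1 + X * C) * (1 - X * B)) * hU
    linear_combination (1 + X * C) * hV - A * hW
  have := congrArg (coeff (n + 1)) key
  rw [← hAe, ← hCe, map_add, coeff_succ_X_mul] at this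
  simp [coeff_one, cnt_true] at this
  exact_mod_cast this

end counting

/-- extend a permutation to ℕ -/
def extP {n : ℕ} (π : Equiv.Perm (Fin n)) (i : ℕ) : ℕ := if h : i < n then π ⟨i, h⟩ else 0

theorem extP_fin {n : ℕ} (π : Equiv.Perm (Fin n)) (i : Fin n) : extP π i = π i := by
  simp [extP]

theorem extP_av {n : ℕ} (π : Equiv.Perm (Fin n)) : AvI (extP π) 0 n ↔ Avoids132 π := by
  constructor
  · rintro h ⟨a, b, c, h1, h2, h3, h4⟩
    refine h a b c (by omega) h1 h2 (by omega) ?_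
    simp only [extP_fin]
    exact ⟨h3, h4⟩
  · intro h i j k _ h2 h3 h4 h5
    rw [zero_add] at h4
    refine h ⟨⟨i, by omega⟩, ⟨j, by omega⟩, ⟨k, by omega⟩, h2, h3, ?_⟩
    rw [Fin.lt_def, Fin.lt_def]
    simp only [← extP_fin]
    exact h5

theorem extP_range {n : ℕ} (π : Equiv.Perm (Fin n)) (i : ℕ) (_ : 0 ≤ i) (h : i < 0 + n) :
    0 ≤ extP π i ∧ extP π i < 0 + n := by
  rw [zero_add] at *
  simp [extP, h]

theorem extP_inj {n : ℕ} (π : Equiv.Perm (Fin n)) (i j : ℕ) (_ : 0 ≤ i) (h : i < j)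
    (h' : j < 0 + n) : extP π i ≠ extP π j := by
  rw [zero_add] at *
  have h'' : i < n := by omega
  simp only [extP, h', h'', dif_pos]
  intro e
  have := π.injective (Fin.ext e)
  simp at this
  omega

theorem extP_hat {n : ℕ} (π : Equiv.Perm (Fin n)) :
    HatI (extP π) 0 n ↔ AvoidsHat (1 : Equiv.Perm (Fin 3)) 0 π := by
  constructor
  · intro h g hg ho
    have h01 : g 0 < g 1 := hg (by decide)
    have p01 : π (g 0) < π (g 1) := (ho 0 1).1 (by decide)
    obtain ⟨k, _, h2, h3⟩ := h (g 0) (g 1) (by omega) h01 (by omega)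
      (by rw [extP_fin, extP_fin]; exact p01)
    rw [zero_add] at h2
    obtain ⟨k, rfl⟩ : ∃ k' : Fin n, k = k' := ⟨⟨k, h2⟩, rfl⟩
    simp only [extP_fin, Fin.val_fin_lt] at h3
    have main : ∀ x y z : Fin n, x < y → y < z → π x < π y → π y < π z →
        IsOcc (1 : Equiv.Perm (Fin 3)) π ![x, y, z] := by
      intro x y z h1 h2 h3 h4
      refine ⟨?_, ?_⟩
      · intro a b hab
        fin_cases a <;> fin_cases b <;> simp_all <;> omega
      · intro a b
        fin_cases a <;> fin_cases b <;> simp <;> omega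
    rcases h3 with ⟨a, b⟩ | ⟨a, b, c, d⟩ | ⟨a, b⟩
    · refine ⟨_, main k (g 0) (g 1) a h01 b p01, ?_⟩
      rintro _ ⟨i, rfl⟩
      fin_cases i
      · exact ⟨1, rfl⟩
      · exact ⟨2, rfl⟩
    · refine ⟨_, main (g 0) k (g 1) a b c d, ?_⟩
      rintro _ ⟨i, rfl⟩
      fin_cases i
      · exact ⟨0, rfl⟩
      · exact ⟨2, rfl⟩
    · refine ⟨_, main (g 0) (g 1) k h01 a p01 b, ?_⟩
      rintro _ ⟨i, rfl⟩
      fin_cases i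
      · exact ⟨0, rfl⟩
      · exact ⟨1, rfl⟩
  · intro h i j _ h2 h3 h4
    rw [zero_add] at h3
    obtain ⟨i, rfl⟩ : ∃ k' : Fin n, i = k' := ⟨⟨i, by omega⟩, rfl⟩
    obtain ⟨j, rfl⟩ : ∃ k' : Fin n, j = k' := ⟨⟨j, by omega⟩, rfl⟩
    rw [extP_fin, extP_fin] at h4
    obtain ⟨t, ⟨ht, hp⟩, hr⟩ := h ![i, j]
      (by intro a b hab; fin_cases a <;> fin_cases b <;> simp_all)
      (by
        intro a b
        fin_cases a <;> fin_cases b <;> simp [Fin.succAbove] <;> omega)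
    obtain ⟨a, ha⟩ := hr ⟨0, rfl⟩
    obtain ⟨b, hb⟩ := hr ⟨1, rfl⟩
    simp at ha hb
    have t01 : t 0 < t 1 := ht (by decide)
    have t12 : t 1 < t 2 := ht (by decide)
    have p01 : π (t 0) < π (t 1) := (hp 0 1).1 (by decide)
    have p12 : π (t 1) < π (t 2) := (hp 1 2).1 (by decide)
    have hab : a < b := by
      rw [← ht.lt_iff_lt, ha, hb]; exact h2
    subst ha hb
    have fin : ∀ k : Fin n, ((k < t a ∧ π k < π (t a)) ∨ (t a < k ∧ k < t b ∧ π (t a) < π k ∧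
        π k < π (t b)) ∨ (t b < k ∧ π (t b) < π k)) → ∃ k, 0 ≤ k ∧ k < 0 + n ∧
      ((k < (t a : ℕ) ∧ extP π k < extP π (t a)) ∨ ((t a : ℕ) < k ∧ k < (t b : ℕ) ∧
        extP π (t a) < extP π k ∧ extP π k < extP π (t b)) ∨
        ((t b : ℕ) < k ∧ extP π (t b) < extP π k)) := by
      intro k hk
      refine ⟨k, by omega, by omega, ?_⟩
      simpa only [extP_fin, Fin.val_fin_lt] using hk
    fin_cases a <;> fin_cases b <;> simp at hab
    · exact fin (t 2) (Or.inr (Or.inr ⟨t12, p12⟩))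
    · exact fin (t 1) (Or.inr (Or.inl ⟨t01, t12, p01, p12⟩))
    · exact fin (t 0) (Or.inl ⟨t01, p01⟩)

theorem card_perm_s9 {n : ℕ} (P : Equiv.Perm (Fin n) → Prop) (Q : BinaryTree Unit → Prop)
    (h : ∀ π T, T.numNodes = n → TRep T (extP π) 0 0 → (P π ↔ Q T)) :
    Nat.card {π : Equiv.Perm (Fin n) | Avoids132 π ∧ P π} = cnt Q n := by
  classical
  rw [Nat.card_coe_set_eq, Set.ncard_eq_toFinset_card']
  unfold cnt
  have ex : ∀ π : Equiv.Perm (Fin n), Avoids132 π →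
      ∃ T : BinaryTree Unit, T.numNodes = n ∧ TRep T (extP π) 0 0 := fun π hπ =>
    TRep.of_av n _ 0 0 (extP_range π) (extP_inj π) ((extP_av π).2 hπ)
  choose F hF1 hF2 using ex
  refine Finset.card_bij (fun π hπ => F π (by simp at hπ; exact hπ.1)) ?_ ?_ ?_
  · intro π hπ
    simp at hπ
    simp only [Finset.mem_filter, BinaryTree.mem_treesOfNumNodesEq]
    exact ⟨hF1 _ _, (h π _ (hF1 _ _) (hF2 _ _)).1 hπ.2⟩
  · intro π hπ σ hσ e
    simp at hπ hσ
    have r1 := hF2 π hπ.1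
    have r2 := hF2 σ hσ.1
    rw [← e] at r2
    ext i
    rw [← extP_fin, ← extP_fin]
    exact r1.fun_unique r2 i (by omega) (by rw [hF1]; omega)
  · intro T hT
    simp only [Finset.mem_filter, BinaryTree.mem_treesOfNumNodesEq] at hT
    obtain ⟨rfl, hQ⟩ := hT
    obtain ⟨f, hf⟩ := TRep.exists T 0 0
    have hr := hf.range
    have hi := hf.inj
    let g : Fin T.numNodes → Fin T.numNodes := fun i =>
      ⟨f i, by have := hr i (by omega) (by omega); omega⟩
    have hg : Function.Injective g := by
      intro i j e
      have e : f i = f j := congrArg Fin.val e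
      rcases lt_trichotomy i j with q | q | q
      · exact absurd e (hi i j (by omega) q (by omega))
      · exact q
      · exact absurd e.symm (hi j i (by omega) q (by omega))
    let π : Equiv.Perm (Fin T.numNodes) :=
      Equiv.ofBijective g (Finite.injective_iff_bijective.1 hg)
    have hπ : TRep T (extP π) 0 0 := hf.congr fun i _ h2 => by
      rw [zero_add] at h2
      simp [extP, h2, π, g]
    have ha : Avoids132 π := (extP_av π).1 hπ.av
    refine ⟨π, ?_, ?_⟩
    · simp
      exact ⟨ha, (h π T rfl hπ).2 hQ⟩
    · exact (hF2 π ha).unique hπ (hF1 π ha)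

/-- Corollary `Cat`. For every `n ≥ 1`, `|S_n(132, 1̂23)|` (permutations
avoiding `132` and the hatted pattern obtained from `123` by marking its first entry) equals the
`(n−1)`-th Catalan number; in particular `|S_n(132, 1̂23)| = |S_{n−1}(132)|`. -/
theorem stmt9 (n : ℕ) (hn : 1 ≤ n) :
    Nat.card {π : Equiv.Perm (Fin n) |
        Avoids132 π ∧ AvoidsHat (1 : Equiv.Perm (Fin 3)) 0 π} = catalan (n - 1) ∧
    Nat.card {π : Equiv.Perm (Fin n) |
        Avoids132 π ∧ AvoidsHat (1 : Equiv.Perm (Fin 3)) 0 π}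
      = Nat.card {σ : Equiv.Perm (Fin (n - 1)) | Avoids132 σ} := by

  have h1 : Nat.card {π : Equiv.Perm (Fin n) |
        Avoids132 π ∧ AvoidsHat (1 : Equiv.Perm (Fin 3)) 0 π} = catalan (n - 1) := by
    rw [card_perm_s9 (fun π => AvoidsHat (1 : Equiv.Perm (Fin 3)) 0 π) HatT]
    · obtain ⟨m, rfl⟩ := Nat.exists_eq_add_of_le' hn
      exact cnt_hat m
    · rintro π T rfl hT
      rw [← extP_hat, hT.hat]
  refine ⟨h1, ?_⟩
  rw [h1, ← cnt_true, ← card_perm_s9 (fun _ => True) (fun _ => True) (fun _ _ _ _ => Iff.rfl)]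
  simp
end

section
/- For every integer n ≥ 1, the number of permutations of length n avoiding 132 and avoiding the hatted pattern 21̂3 equals the (n−1)-th Motzkin number M_{n−1}. -/
/-- The Motzkin numbers: `M_0 = 1` and `M_{m+1} = M_m + Σ_{k=0}^{m−1} M_k · M_{m−1−k}`. -/
def motzkin : ℕ → ℕ
  | 0 => 1
  | m + 1 => motzkin m + ∑ i : Fin m, motzkin i * motzkin (m - 1 - i)


namespace Mot

theorem hat_iff {n : ℕ} (π : Equiv.Perm (Fin n)) :
    AvoidsHat (Equiv.swap (0 : Fin 3) 1) 1 π ↔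
      ∀ i j : Fin n, i < j → π i < π j →
        ∃ k, (i < k ∧ k < j ∧ π k < π i) ∨ (k < i ∧ π i < π k ∧ π k < π j) := by
  constructor
  · intro H i j hij hp
    obtain ⟨h, ⟨hm, hocc⟩, hr⟩ := H ![i, j] (by
      intro a b hab
      fin_cases a <;> fin_cases b <;> simp_all) (by
      intro a b
      fin_cases a <;> fin_cases b <;> simp [hp, show (Equiv.swap (0 : Fin 3) 1) 2 = 2 by decide, hp.le])
    have h01 : h 0 < h 1 := hm (by decide)
    have h12 : h 1 < h 2 := hm (by decide)
    have e1 : π (h 1) < π (h 0) := (hocc 1 0).1 (by decide)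
    have e2 : π (h 0) < π (h 2) := (hocc 0 2).1 (by decide)
    obtain ⟨a, ha⟩ := hr (show i ∈ _ from ⟨0, rfl⟩)
    obtain ⟨b, hb⟩ := hr (show j ∈ _ from ⟨1, rfl⟩)
    subst ha hb
    fin_cases a <;> fin_cases b <;> simp at hij hp ⊢ <;> first | exact ⟨h 1, by grind⟩ | exact ⟨h 0, by grind⟩ | (exfalso; order)
  · intro H g hg hgp
    have hij : g 0 < g 1 := hg (by decide)
    have hp : π (g 0) < π (g 1) := (hgp 0 1).1 (by decide)
    have key : ∀ x y z : Fin n, x < y → y < z → π y < π x → π x < π z →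
        IsOcc (Equiv.swap (0 : Fin 3) 1) π ![x, y, z] := by
      intro x y z hxy hyz h1 h2
      constructor
      · intro a b hab
        fin_cases a <;> fin_cases b <;> simp_all <;> order
      · have t0 : (Equiv.swap (0 : Fin 3) 1) 0 = 1 := by decide
        have t1 : (Equiv.swap (0 : Fin 3) 1) 1 = 0 := by decide
        have t2 : (Equiv.swap (0 : Fin 3) 1) 2 = 2 := by decide
        intro a b
        fin_cases a <;> fin_cases b <;> simp [t0, t1, t2] <;> order
    obtain ⟨k, ⟨h1, h2, h3⟩ | ⟨h1, h2, h3⟩⟩ := H _ _ hij hp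
    · refine ⟨![g 0, k, g 1], key _ _ _ h1 h2 h3 hp, ?_⟩
      rintro _ ⟨a, rfl⟩
      fin_cases a
      · exact ⟨0, rfl⟩
      · exact ⟨2, rfl⟩
    · refine ⟨![k, g 0, g 1], key _ _ _ h1 hij h2 h3, ?_⟩
      rintro _ ⟨a, rfl⟩
      fin_cases a
      · exact ⟨1, rfl⟩
      · exact ⟨2, rfl⟩

theorem num (a c : ℕ → ℕ) (a0 : a 0 = 1) (c0 : c 0 = 1)
    (h1 : ∀ n, a (n + 1) = ∑ p ∈ Finset.HasAntidiagonal.antidiagonal n, c p.1 * a p.2)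
    (h2 : ∀ n, a (n + 1) = c (n + 1) + c n) : ∀ n, a (n + 1) = motzkin n := by
  let A : PowerSeries ℤ := PowerSeries.mk fun n => (a n : ℤ)
  let C : PowerSeries ℤ := PowerSeries.mk fun n => (c n : ℤ)
  let N : PowerSeries ℤ := PowerSeries.mk fun n => (a (n + 1) : ℤ)
  have e1 : A = 1 + PowerSeries.X * N := by
    ext n
    cases n <;> simp [A, N, a0, PowerSeries.coeff_succ_X_mul, PowerSeries.coeff_one]
  have e2 : N = C * A := by
    ext n
    simp [N, C, A, PowerSeries.coeff_mul, h1]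
  have e3 : A = C + PowerSeries.X * C := by
    ext n
    cases n <;> simp [A, C, a0, c0, PowerSeries.coeff_succ_X_mul, h2]
  have e4 : N = 1 + PowerSeries.X * N + PowerSeries.X * (PowerSeries.X * (N * N)) := by
    have : (1 + PowerSeries.X) * N = A * A := by
      calc (1 + PowerSeries.X) * N = (C + PowerSeries.X * C) * A := by rw [e2]; ring
        _ = _ := by rw [← e3]
    rw [e1] at this
    linear_combination this
  have r0 : a 1 = 1 := by
    rw [h1]; simp [a0, c0]
  have r1 : a 2 = 1 := by
    have := congrArg (PowerSeries.coeff 1) e4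
    rw [show (1 : ℕ) = 0 + 1 from rfl] at this
    simp only [map_add, PowerSeries.coeff_succ_X_mul] at this
    simp [N, PowerSeries.coeff_one, r0] at this
    exact_mod_cast this
  have r2 : ∀ m, a (m + 3) = a (m + 2) + ∑ p ∈ Finset.HasAntidiagonal.antidiagonal m, a (p.1 + 1) * a (p.2 + 1) := by
    intro m
    have := congrArg (PowerSeries.coeff (m + 1 + 1)) e4
    simp only [map_add, PowerSeries.coeff_succ_X_mul] at this
    simp [N, PowerSeries.coeff_one, PowerSeries.coeff_mul] at this
    exact_mod_cast this
  intro n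
  induction n using Nat.strong_induction_on with
  | _ n ih =>
    match n with
    | 0 => simp [r0, motzkin]
    | 1 => simp [r1, motzkin]
    | m + 2 =>
      rw [r2, motzkin, ih (m + 1) (by omega), Finset.Nat.sum_antidiagonal_eq_sum_range_succ_mk,
        Finset.sum_range]
      congr 1
      refine Finset.sum_congr rfl fun i _ => ?_
      rw [ih _ (by omega), ih _ (by omega)]
      simp

end Mot

namespace Mot

theorem q2 (a b m : ℕ) (t : List ℕ) : [a, b].Sublist (m :: t) ↔
    (a = m ∧ b ∈ t) ∨ [a, b].Sublist t := by
  simp only [List.sublist_cons_iff]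
  grind

theorem q3 (a b c m : ℕ) (t : List ℕ) : [a, b, c].Sublist (m :: t) ↔
    (a = m ∧ [b, c].Sublist t) ∨ [a, b, c].Sublist t := by
  simp only [List.sublist_cons_iff]
  grind

theorem p2 (a b : ℕ) (s t : List ℕ) : [a, b].Sublist (s ++ t) ↔
    [a, b].Sublist s ∨ (a ∈ s ∧ b ∈ t) ∨ [a, b].Sublist t := by
  induction s with
  | nil => simp
  | cons x s ih =>
    simp only [List.cons_append, q2, ih, List.mem_cons, List.mem_append]
    tauto

theorem p3 (a b c : ℕ) (s t : List ℕ) : [a, b, c].Sublist (s ++ t) ↔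
    [a, b, c].Sublist s ∨ ([a, b].Sublist s ∧ c ∈ t) ∨ (a ∈ s ∧ [b, c].Sublist t) ∨
      [a, b, c].Sublist t := by
  induction s with
  | nil => simp
  | cons x s ih =>
    simp only [List.cons_append, q2, q3, p2, ih, List.mem_cons]
    clear ih
    generalize (a = x) = P1, [b, c].Sublist s = P2, (b ∈ s) = P3, (c ∈ t) = P4,
      [b, c].Sublist t = P5, [a, b, c].Sublist s = P6, [a, b].Sublist s = P7, (a ∈ s) = P8,
      [a, b, c].Sublist t = P9
    grind

theorem m2 {a b : ℕ} {s : List ℕ} (h : [a, b].Sublist s) : a ∈ s ∧ b ∈ s :=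
  ⟨h.subset (by simp), h.subset (by simp)⟩

theorem m3 {a b c : ℕ} {s : List ℕ} (h : [a, b, c].Sublist s) : a ∈ s ∧ b ∈ s ∧ c ∈ s :=
  ⟨h.subset (by simp), h.subset (by simp), h.subset (by simp)⟩


def Av1 (l : List ℕ) : Prop := ∀ a b c, [a, b, c].Sublist l → ¬ (a < c ∧ c < b)

def Av2 (l : List ℕ) : Prop := ∀ x y, [x, y].Sublist l → x < y →
  ∃ z, (z < x ∧ [x, z, y].Sublist l) ∨ (x < z ∧ z < y ∧ [z, x, y].Sublist l)

def Inv (l : List ℕ) : Prop := ∀ s ∈ l, ∃ z, (z < s ∧ [s, z].Sublist l) ∨ (s < z ∧ [z, s].Sublist l)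

theorem sub_map2 (a b j : ℕ) (l : List ℕ) :
    [a, b].Sublist (l.map (· + j)) ↔ ∃ x y, a = x + j ∧ b = y + j ∧ [x, y].Sublist l := by
  rw [List.sublist_map_iff]
  constructor
  · rintro ⟨l', h, e⟩
    match l', e with
    | [x, y], e => simp at e; exact ⟨x, y, e.1, e.2, h⟩
  · rintro ⟨x, y, rfl, rfl, h⟩
    exact ⟨_, h, rfl⟩

theorem sub_map3 (a b c j : ℕ) (l : List ℕ) :
    [a, b, c].Sublist (l.map (· + j)) ↔
      ∃ x y z, a = x + j ∧ b = y + j ∧ c = z + j ∧ [x, y, z].Sublist l := by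
  rw [List.sublist_map_iff]
  constructor
  · rintro ⟨l', h, e⟩
    match l', e with
    | [x, y, z], e => simp at e; exact ⟨x, y, z, e.1, e.2.1, e.2.2, h⟩
  · rintro ⟨x, y, z, rfl, rfl, rfl, h⟩
    exact ⟨_, h, rfl⟩

theorem Av1_map (j : ℕ) (l : List ℕ) : Av1 (l.map (· + j)) ↔ Av1 l := by
  constructor
  · intro H a b c h hh
    exact H (a + j) (b + j) (c + j) ((sub_map3 ..).2 ⟨_, _, _, rfl, rfl, rfl, h⟩) (by omega)
  · intro H a b c h hh
    obtain ⟨x, y, z, rfl, rfl, rfl, h3⟩ := (sub_map3 ..).1 h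
    exact H x y z h3 (by omega)

theorem Av2_map (j : ℕ) (l : List ℕ) : Av2 (l.map (· + j)) ↔ Av2 l := by
  constructor
  · intro H a b h hh
    obtain ⟨z, ⟨h1, h2⟩ | ⟨h1, h1', h2⟩⟩ :=
      H (a + j) (b + j) ((sub_map2 ..).2 ⟨_, _, rfl, rfl, h⟩) (by omega)
    all_goals
      obtain ⟨x, y, z, e1, e2, e3, h⟩ := (sub_map3 ..).1 h2
      simp at e1 e2 e3
      subst e1 e2 e3
    · exact ⟨y, Or.inl ⟨by omega, h⟩⟩
    · exact ⟨x, Or.inr ⟨by omega, by omega, h⟩⟩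
  · intro H a b h hh
    obtain ⟨x, y, rfl, rfl, h3⟩ := (sub_map2 ..).1 h
    obtain ⟨z, ⟨h1, h2⟩ | ⟨h1, h1', h2⟩⟩ := H x y h3 (by omega)
    · exact ⟨z + j, Or.inl ⟨by omega, (sub_map3 ..).2 ⟨_, _, _, rfl, rfl, rfl, h2⟩⟩⟩
    · exact ⟨z + j, Or.inr ⟨by omega, by omega, (sub_map3 ..).2 ⟨_, _, _, rfl, rfl, rfl, h2⟩⟩⟩

theorem Inv_map (j : ℕ) (l : List ℕ) : Inv (l.map (· + j)) ↔ Inv l := by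
  constructor
  · intro H a h
    obtain ⟨z, ⟨h1, h2⟩ | ⟨h1, h2⟩⟩ := H (a + j) (List.mem_map.2 ⟨a, h, rfl⟩)
    all_goals
      obtain ⟨x, y, e1, e2, h⟩ := (sub_map2 ..).1 h2
      simp at e1 e2
      subst e1 e2
    · exact ⟨y, Or.inl ⟨by omega, h⟩⟩
    · exact ⟨x, Or.inr ⟨by omega, h⟩⟩
  · intro H a h
    obtain ⟨x, h3, rfl⟩ := List.mem_map.1 h
    obtain ⟨z, ⟨h1, h2⟩ | ⟨h1, h2⟩⟩ := H x h3
    · exact ⟨z + j, Or.inl ⟨by omega, (sub_map2 ..).2 ⟨_, _, rfl, rfl, h2⟩⟩⟩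
    · exact ⟨z + j, Or.inr ⟨by omega, (sub_map2 ..).2 ⟨_, _, rfl, rfl, h2⟩⟩⟩

theorem Av1_iff (s t : List ℕ) (n : ℕ) (hs : ∀ x ∈ s, x < n) (ht : ∀ x ∈ t, x < n)
    (hst : ∀ x ∈ s, ∀ y ∈ t, y < x) : Av1 (s ++ n :: t) ↔ Av1 s ∧ Av1 t := by
  simp only [Av1, p3, q3, q2, List.mem_cons]
  constructor
  · intro H
    exact ⟨fun a b c h => H a b c (Or.inl h), fun a b c h => H a b c (by tauto)⟩
  · rintro ⟨H1, H2⟩ a b c (h | ⟨h, rfl | h'⟩ | ⟨h, ⟨rfl, h'⟩ | h'⟩ | ⟨rfl, h⟩ | h)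
    · exact H1 _ _ _ h
    · have := hs _ (m2 h).2; omega
    · have := hst _ (m2 h).1 _ h'; omega
    · have := hst _ h _ h'; omega
    · have := hst _ h _ (m2 h').2; omega
    · have := ht _ (m2 h).2; omega
    · exact H2 _ _ _ h

theorem Av2_iff (s t : List ℕ) (n : ℕ) (hs : ∀ x ∈ s, x < n) (ht : ∀ x ∈ t, x < n)
    (hst : ∀ x ∈ s, ∀ y ∈ t, y < x) : Av2 (s ++ n :: t) ↔ (Av2 s ∧ Inv s) ∧ Av2 t := by
  simp only [Av2, Inv, p3, q3, p2, q2, List.mem_cons]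
  constructor
  · intro H
    refine ⟨⟨?_, ?_⟩, ?_⟩
    · intro x y h hxy
      have hx := hs _ (m2 h).1
      have hy := hs _ (m2 h).2
      obtain ⟨z, ⟨h1, (g | ⟨g, e | g'⟩ | ⟨g, ⟨e, g'⟩ | g'⟩ | ⟨e, g⟩ | g)⟩ | ⟨h1, h2, (g | ⟨g, e | g'⟩ | ⟨g, ⟨e, g'⟩ | g'⟩ | ⟨e, g⟩ | g)⟩⟩ := H x y (Or.inl h) hxy <;>
        grind [m2, m3]
    · intro x h
      have hx := hs _ h
      obtain ⟨z, ⟨h1, (g | ⟨g, e | g'⟩ | ⟨g, ⟨e, g'⟩ | g'⟩ | ⟨e, g⟩ | g)⟩ | ⟨h1, h2, (g | ⟨g, e | g'⟩ | ⟨g, ⟨e, g'⟩ | g'⟩ | ⟨e, g⟩ | g)⟩⟩ := H x n (by tauto) hx <;>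
        grind [m2, m3]
    · intro x y h hxy
      have hx := ht _ (m2 h).1
      have hy := ht _ (m2 h).2
      have hx' := hst x
      have hy' := hst y
      obtain ⟨z, ⟨h1, (g | ⟨g, e | g'⟩ | ⟨g, ⟨e, g'⟩ | g'⟩ | ⟨e, g⟩ | g)⟩ | ⟨h1, h2, (g | ⟨g, e | g'⟩ | ⟨g, ⟨e, g'⟩ | g'⟩ | ⟨e, g⟩ | g)⟩⟩ := H x y (by tauto) hxy <;>
        grind [m2, m3]
  · rintro ⟨⟨H1, H2⟩, H3⟩ x y (h | ⟨h, rfl | h'⟩ | ⟨rfl, h⟩ | h) hxy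
    · obtain ⟨z, hz⟩ := H1 _ _ h hxy
      exact ⟨z, by tauto⟩
    · obtain ⟨z, hz⟩ := H2 _ h
      have h4 := hs _ h
      rcases hz with ⟨h5, h6⟩ | ⟨h5, h6⟩
      · exact ⟨z, Or.inl ⟨h5, by tauto⟩⟩
      · have := hs _ (m2 h6).1
        exact ⟨z, Or.inr ⟨h5, this, by tauto⟩⟩
    · have := hst _ h _ h'; omega
    · have := ht _ h; omega
    · obtain ⟨z, hz⟩ := H3 _ _ h hxy
      rcases hz with ⟨h5, h6⟩ | ⟨h5, h5', h6⟩
      · exact ⟨z, Or.inl ⟨h5, by simp only [h6, or_true]⟩⟩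
      · exact ⟨z, Or.inr ⟨h5, h5', by simp only [h6, or_true]⟩⟩

theorem Inv_iff (s t : List ℕ) (n : ℕ) (hs : ∀ x ∈ s, x < n) (ht : ∀ x ∈ t, x < n)
    (hst : ∀ x ∈ s, ∀ y ∈ t, y < x) : Inv (s ++ n :: t) ↔ t ≠ [] := by
  simp only [Inv, p2, q2, List.mem_cons, List.mem_append]
  constructor
  · rintro H rfl
    have hn : n ∉ s := fun h => absurd (hs n h) (by omega)
    obtain ⟨z, ⟨h1, h | ⟨h, _⟩ | ⟨_, h⟩ | h⟩ | ⟨h1, h | ⟨h, _⟩ | ⟨_, h⟩ | h⟩⟩ := H n (by simp)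
    · exact hn (m2 h).1
    · exact hn h
    · simp at h
    · simp at h
    · exact hn (m2 h).2
    · have := hs z h
      omega
    · simp at h
    · simp at h
  · intro h
    obtain ⟨y, hy⟩ := List.exists_mem_of_ne_nil _ h
    rintro x (h | rfl | h)
    · exact ⟨y, Or.inl ⟨hst _ h _ hy, by tauto⟩⟩
    · exact ⟨y, Or.inl ⟨ht _ hy, by tauto⟩⟩
    · exact ⟨n, Or.inr ⟨ht _ h, by tauto⟩⟩

end Mot

namespace Mot

theorem of2 {n : ℕ} (g : Fin n → ℕ) (a b : ℕ) : [a, b].Sublist (List.ofFn g) ↔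
    ∃ i j, i < j ∧ g i = a ∧ g j = b := by
  induction n with
  | zero => simp
  | succ n ih =>
    simp only [List.ofFn_succ, q2, ih, List.mem_ofFn, Fin.exists_fin_succ]
    simp [eq_comm]

theorem of3 {n : ℕ} (g : Fin n → ℕ) (a b c : ℕ) : [a, b, c].Sublist (List.ofFn g) ↔
    ∃ i j k, i < j ∧ j < k ∧ g i = a ∧ g j = b ∧ g k = c := by
  induction n with
  | zero => simp
  | succ n ih =>
    simp only [List.ofFn_succ, q3, of2, ih, Fin.exists_fin_succ]
    simp [eq_comm]
    refine or_congr ⟨?_, ?_⟩ Iff.rfl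
    · rintro ⟨h, i, j, h'⟩
      exact ⟨i, j, h'.1, h, h'.2⟩
    · rintro ⟨i, j, h1, h2, h3⟩
      exact ⟨h2, i, j, h1, h3⟩

theorem av1_ofFn {n : ℕ} (π : Equiv.Perm (Fin n)) :
    Avoids132 π ↔ Av1 (List.ofFn fun i => (π i : ℕ)) := by
  simp only [Avoids132, Av1, of3]
  constructor
  · rintro H _ _ _ ⟨i, j, k, h1, h2, rfl, rfl, rfl⟩ h
    exact H ⟨i, j, k, h1, h2, h.1, h.2⟩
  · rintro H ⟨i, j, k, h1, h2, h⟩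
    exact H _ _ _ ⟨i, j, k, h1, h2, rfl, rfl, rfl⟩ h

theorem av2_ofFn {n : ℕ} (π : Equiv.Perm (Fin n)) :
    AvoidsHat (Equiv.swap (0 : Fin 3) 1) 1 π ↔ Av2 (List.ofFn fun i => (π i : ℕ)) := by
  rw [hat_iff]
  simp only [Av2, of3, of2]
  have inj : ∀ x y : Fin n, (π x : ℕ) = π y → x = y := fun x y h => π.injective (Fin.ext h)
  constructor
  · rintro H _ _ ⟨i, j, h1, rfl, rfl⟩ h
    obtain ⟨k, ⟨h1, h2, h3⟩ | ⟨h1, h2, h3⟩⟩ := H i j h1 h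
    · exact ⟨π k, Or.inl ⟨h3, i, k, j, h1, h2, rfl, rfl, rfl⟩⟩
    · exact ⟨π k, Or.inr ⟨h2, h3, k, i, j, h1, by assumption, rfl, rfl, rfl⟩⟩
  · intro H i j hij h
    obtain ⟨_, ⟨h1, i', k, j', h2, h3, e1, rfl, e2⟩ | ⟨h1, h1', k, i', j', h2, h3, rfl, e1, e2⟩⟩ :=
      H _ _ ⟨i, j, hij, rfl, rfl⟩ h
    · obtain rfl := inj _ _ e1
      obtain rfl := inj _ _ e2
      exact ⟨k, Or.inl ⟨h2, h3, h1⟩⟩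
    · obtain rfl := inj _ _ e1
      obtain rfl := inj _ _ e2
      exact ⟨k, Or.inr ⟨h2, h1, h1'⟩⟩

theorem perm_range_iff (l : List ℕ) (n : ℕ) :
    l.Perm (List.range n) ↔ l.Nodup ∧ ∀ x, x ∈ l ↔ x < n := by
  constructor
  · intro h
    exact ⟨h.nodup_iff.2 List.nodup_range, fun x => by rw [h.mem_iff, List.mem_range]⟩
  · rintro ⟨h1, h2⟩
    rw [List.perm_ext_iff_of_nodup h1 List.nodup_range]
    simpa using h2

open Classical in
noncomputable def A (n : ℕ) : Finset (List ℕ) :=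
  (List.range n).permutations.toFinset.filter fun l => Av1 l ∧ Av2 l

open Classical in
noncomputable def C (n : ℕ) : Finset (List ℕ) := (A n).filter Inv

theorem mem_A (n : ℕ) (l : List ℕ) :
    l ∈ A n ↔ (l.Nodup ∧ ∀ x, x ∈ l ↔ x < n) ∧ Av1 l ∧ Av2 l := by
  simp [A, ← perm_range_iff]

theorem mem_C (n : ℕ) (l : List ℕ) : l ∈ C n ↔ l ∈ A n ∧ Inv l := by
  simp [C]

theorem card_perm (n : ℕ) : Nat.card {π : Equiv.Perm (Fin n) |
        Avoids132 π ∧ AvoidsHat (Equiv.swap (0 : Fin 3) 1) 1 π} = (A n).card := by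
  rw [Nat.card_coe_set_eq, ← Set.ncard_coe_finset]
  have hinj : Function.Injective (fun π : Equiv.Perm (Fin n) => List.ofFn fun i => (π i : ℕ)) := by
    intro π ρ h
    have := List.ofFn_injective h
    ext i
    exact congrFun this i
  rw [← Set.ncard_image_of_injective _ hinj]
  congr 1
  ext l
  simp only [Set.mem_image, Set.mem_ofPred_eq, Finset.mem_coe, mem_A]
  constructor
  · rintro ⟨π, ⟨h1, h2⟩, rfl⟩
    refine ⟨⟨?_, ?_⟩, (av1_ofFn π).1 h1, (av2_ofFn π).1 h2⟩
    · rw [List.nodup_ofFn]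
      exact fun x y h => π.injective (Fin.ext h)
    · intro x
      rw [List.mem_ofFn]
      constructor
      · rintro ⟨i, rfl⟩
        exact (π i).2
      · intro hx
        exact ⟨π.symm ⟨x, hx⟩, by simp⟩
  · rintro ⟨hp, h1, h2⟩
    have hl : l.length = n := by
      have := ((perm_range_iff l n).2 hp).length_eq
      simpa using this
    subst hl
    let f : Fin l.length → Fin l.length := fun i => ⟨l[i], (hp.2 _).1 (List.getElem_mem _)⟩
    have hf : Function.Injective f := by
      intro i j h
      have h' : l[i] = l[j] := congrArg Fin.val h
      exact Fin.ext ((hp.1.getElem_inj_iff).1 h')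
    let π : Equiv.Perm (Fin l.length) := Equiv.ofBijective f (Finite.injective_iff_bijective.1 hf)
    have e : (List.ofFn fun i => (π i : ℕ)) = l := by
      apply List.ext_getElem
      · simp
      · intro i h1 h2
        simp [π, f]
    exact ⟨π, ⟨(av1_ofFn π).2 (by rw [e]; exact h1), (av2_ofFn π).2 (by rw [e]; exact h2)⟩, e⟩

def F (n j : ℕ) (p : List ℕ × List ℕ) : List ℕ := p.1.map (· + j) ++ n :: p.2

theorem down (D : Finset ℕ) (h : ∀ x y, x < y → y ∈ D → x ∈ D) : ∀ x, x ∈ D ↔ x < D.card := by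
  have : D ⊆ Finset.range D.card := by
    intro x hx
    have h1 : Finset.range (x + 1) ⊆ D := by
      intro y hy
      rw [Finset.mem_range] at hy
      rcases Nat.lt_succ_iff_lt_or_eq.1 hy with h' | rfl
      · exact h _ _ h' hx
      · exact hx
    have := Finset.card_le_card h1
    rw [Finset.card_range] at this
    exact Finset.mem_range.2 this
  have e := Finset.eq_of_subset_of_card_le this (by simp)
  intro x
  conv_lhs => rw [e]
  simp

theorem bounds (i j : ℕ) (s t : List ℕ) (hs : ∀ x, x ∈ s ↔ x < i) (ht : ∀ x, x ∈ t ↔ x < j) :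
    (∀ x ∈ s.map (· + j), x < i + j) ∧ (∀ x ∈ t, x < i + j) ∧
    (∀ x ∈ s.map (· + j), ∀ y ∈ t, y < x) := by
  simp only [List.mem_map, ht, hs]
  refine ⟨?_, ?_, ?_⟩
  · rintro _ ⟨x, h, rfl⟩; omega
  · intro x h; omega
  · rintro _ ⟨x, h, rfl⟩ y hy; omega

theorem mem_F (n : ℕ) (l : List ℕ) : l ∈ A (n + 1) ↔
    ∃ i j s t, i + j = n ∧ s ∈ C i ∧ t ∈ A j ∧ l = F n j (s, t) := by
  constructor
  · intro hl
    obtain ⟨⟨hn, hm⟩, h1, h2⟩ := (mem_A _ _).1 hl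
    obtain ⟨s, t, rfl⟩ := List.append_of_mem ((hm n).2 (by omega))
    have hnd := hn
    rw [List.nodup_append, List.nodup_cons] at hnd
    obtain ⟨ns, ⟨nt, nt'⟩, dst⟩ := hnd
    have hs : ∀ x ∈ s, x < n := by
      intro x hx
      have := (hm x).1 (by simp [hx])
      have := dst x hx n (by simp)
      omega
    have ht : ∀ x ∈ t, x < n := by
      intro x hx
      have := (hm x).1 (by simp [hx])
      have : x ≠ n := by rintro rfl; exact nt hx
      omega
    have hst : ∀ x ∈ s, ∀ y ∈ t, y < x := by
      intro x hx y hy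
      by_contra hc
      have := dst x hx y (by simp [hy])
      refine h1 x n y ?_ ⟨by omega, ht y hy⟩
      rw [p3, q2]
      tauto
    have hall : ∀ x, x < n → x ∈ s ∨ x ∈ t := by
      intro x hx
      have := (hm x).2 (by omega)
      simp only [List.mem_append, List.mem_cons] at this
      rcases this with h | h | h
      · exact Or.inl h
      · omega
      · exact Or.inr h
    have hd := down t.toFinset (by
      intro x y hxy hy
      rw [List.mem_toFinset] at *
      rcases hall x (hxy.trans (ht y hy)) with h | h
      · have := hst x h y hy
        omega
      · exact h)
    rw [List.toFinset_card_of_nodup nt'] at hd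
    simp only [List.mem_toFinset] at hd
    set j := t.length with hj
    have hsj : ∀ x, x ∈ s ↔ j ≤ x ∧ x < n := by
      intro x
      constructor
      · intro hx
        refine ⟨?_, hs x hx⟩
        by_contra hc
        exact absurd (hst x hx x ((hd x).2 (by omega))) (by omega)
      · rintro ⟨h3, h4⟩
        rcases hall x h4 with h | h
        · exact h
        · have := (hd x).1 h
          omega
    have hjn : j ≤ n := by
      by_contra hc
      have := ht n ((hd n).2 (by omega))
      omega
    have es : (s.map (· - j)).map (· + j) = s := by
      rw [List.map_map]
      conv_rhs => rw [← List.map_id s]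
      apply List.map_congr_left
      intro x hx
      have := (hsj x).1 hx
      simp
      omega
    have g1 := (Av1_iff s t n hs ht hst).1 h1
    have g2 := (Av2_iff s t n hs ht hst).1 h2
    refine ⟨n - j, j, s.map (· - j), t, by omega, ?_, ?_, ?_⟩
    · rw [mem_C, mem_A, ← Av1_map j, ← Av2_map j, ← Inv_map j, es]
      refine ⟨⟨⟨?_, ?_⟩, g1.1, g2.1.1⟩, g2.1.2⟩
      · exact List.Nodup.of_map (· + j) (by rw [es]; exact ns)
      · intro x
        rw [List.mem_map]
        constructor
        · rintro ⟨y, hy, rfl⟩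
          have := (hsj y).1 hy
          omega
        · intro hx
          exact ⟨x + j, (hsj _).2 (by omega), by omega⟩
    · rw [mem_A]
      exact ⟨⟨nt', hd⟩, g1.2, g2.2⟩
    · simp only [F, es]
  · rintro ⟨i, j, s, t, rfl, hs, ht, rfl⟩
    rw [mem_C, mem_A] at hs
    rw [mem_A] at ht
    obtain ⟨⟨⟨ns, ms⟩, s1, s2⟩, s3⟩ := hs
    obtain ⟨⟨nt, mt⟩, t1, t2⟩ := ht
    obtain ⟨b1, b2, b3⟩ := bounds i j s t ms mt
    rw [mem_A]
    simp only [F]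
    rw [Av1_iff _ _ _ b1 b2 b3, Av2_iff _ _ _ b1 b2 b3, Av1_map, Av2_map, Inv_map]
    refine ⟨⟨?_, ?_⟩, ⟨s1, t1⟩, ⟨s2, s3⟩, t2⟩
    · rw [List.nodup_append, List.nodup_cons]
      refine ⟨ns.map (add_left_injective j), ⟨fun h => absurd (b2 _ h) (by omega), nt⟩, ?_⟩
      intro x hx y hy
      rcases List.mem_cons.1 hy with rfl | hy
      · exact (b1 x hx).ne
      · exact (b3 x hx y hy).ne'
    · intro x
      simp only [List.mem_append, List.mem_cons, mt, List.mem_map, ms]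
      constructor
      · rintro (⟨y, hy, rfl⟩ | h | h) <;> omega
      · intro hx
        by_cases h1 : x < j
        · tauto
        · by_cases h2 : x = i + j
          · tauto
          · exact Or.inl ⟨x - j, by omega, by omega⟩

theorem F_inv (n i j : ℕ) (s t : List ℕ) (h : i + j = n) (hs : s ∈ C i) (ht : t ∈ A j) :
    Inv (F n j (s, t)) ↔ t ≠ [] := by
  subst h
  rw [mem_C, mem_A] at hs
  rw [mem_A] at ht
  obtain ⟨b1, b2, b3⟩ := bounds i j s t hs.1.1.2 ht.1.2
  exact Inv_iff _ _ _ b1 b2 b3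

theorem F_inj (n i j i' j' : ℕ) (s t s' t' : List ℕ) (h : i + j = n) (h' : i' + j' = n)
    (hs : s ∈ C i) (ht : t ∈ A j) (hs' : s' ∈ C i') (ht' : t' ∈ A j')
    (e : F n j (s, t) = F n j' (s', t')) : (i = i' ∧ j = j') ∧ s = s' ∧ t = t' := by
  rw [mem_C, mem_A] at hs hs'
  rw [mem_A] at ht ht'
  have b := bounds i j s t hs.1.1.2 ht.1.2
  have b' := bounds i' j' s' t' hs'.1.1.2 ht'.1.2
  rw [h] at b
  rw [h'] at b'
  have l1 := ((perm_range_iff _ _).2 ht.1).length_eq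
  have l2 := ((perm_range_iff _ _).2 ht'.1).length_eq
  rw [List.length_range] at l1 l2
  simp only [F] at e
  have k1 : n ∉ s.map (· + j) := fun hh => absurd (b.1 _ hh) (by omega)
  have k2 : n ∉ s'.map (· + j') := fun hh => absurd (b'.1 _ hh) (by omega)
  have k3 : n ∉ t := fun hh => absurd (b.2.1 _ hh) (by omega)
  obtain ⟨e1, e2⟩ : s.map (· + j) = s'.map (· + j') ∧ t = t' := by
    rw [List.append_cons_inj_of_notMem k1 k3] at e
    exact ⟨e.1, e.2.2⟩
  subst e2
  have ej : j = j' := by omega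
  subst ej
  exact ⟨⟨by omega, rfl⟩, List.map_injective_iff.2 (add_left_injective j) e1, rfl⟩

open Classical in
theorem card_A (n : ℕ) : (A (n + 1)).card =
    ∑ p ∈ Finset.HasAntidiagonal.antidiagonal n, (C p.1).card * (A p.2).card := by
  have : A (n + 1) = (Finset.HasAntidiagonal.antidiagonal n).biUnion fun p =>
      (C p.1 ×ˢ A p.2).image (F n p.2) := by
    ext l
    rw [mem_F]
    simp only [Finset.mem_biUnion, Finset.mem_image, Finset.mem_product, Prod.exists,
      Finset.HasAntidiagonal.mem_antidiagonal]
    constructor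
    · rintro ⟨i, j, s, t, h, hs, ht, rfl⟩
      exact ⟨i, j, h, s, t, ⟨hs, ht⟩, rfl⟩
    · rintro ⟨i, j, h, s, t, ⟨hs, ht⟩, rfl⟩
      exact ⟨i, j, s, t, h, hs, ht, rfl⟩
  rw [this, Finset.card_biUnion]
  · refine Finset.sum_congr rfl ?_
    rintro ⟨i, j⟩ hp
    rw [Finset.HasAntidiagonal.mem_antidiagonal] at hp
    rw [Finset.card_image_of_injOn, Finset.card_product]
    rintro ⟨s, t⟩ h ⟨s', t'⟩ h' e
    simp only [Finset.coe_product, Set.mem_prod, Finset.mem_coe] at h h'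
    obtain ⟨_, rfl, rfl⟩ := F_inj n i j i j s t s' t' hp hp h.1 h.2 h'.1 h'.2 e
    rfl
  · rintro ⟨i, j⟩ hp ⟨i', j'⟩ hp' hne
    rw [Finset.mem_coe, Finset.HasAntidiagonal.mem_antidiagonal] at hp hp'
    show Disjoint _ _
    rw [Finset.disjoint_left]
    intro l hl hl'
    rw [Finset.mem_image] at hl hl'
    obtain ⟨⟨s, t⟩, h, rfl⟩ := hl
    obtain ⟨⟨s', t'⟩, h', e⟩ := hl'
    rw [Finset.mem_product] at h h'
    obtain ⟨⟨rfl, rfl⟩, _⟩ := F_inj n i j i' j' s t s' t' hp hp' h.1 h.2 h'.1 h'.2 e.symm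
    exact hne rfl

theorem A_zero : A 0 = {[]} := by
  ext l
  rw [mem_A, Finset.mem_singleton]
  constructor
  · rintro ⟨⟨_, h⟩, _⟩
    exact List.eq_nil_iff_forall_not_mem.2 fun x hx => by simpa using (h x).1 hx
  · rintro rfl
    refine ⟨by simp, ?_, ?_⟩
    · intro a b c h; simp at h
    · intro a b h; simp at h

theorem C_zero : C 0 = {[]} := by
  ext l
  rw [mem_C, A_zero, Finset.mem_singleton]
  constructor
  · exact fun h => h.1
  · rintro rfl
    exact ⟨rfl, by intro x hx; simp at hx⟩

open Classical in
theorem card_AC (n : ℕ) : (A (n + 1)).card = (C (n + 1)).card + (C n).card := by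
  rw [← Finset.card_filter_add_card_filter_not (s := A (n + 1)) Inv]
  congr 1
  have : (A (n + 1)).filter (fun l => ¬ Inv l) = (C n).image fun s => F n 0 (s, []) := by
    ext l
    rw [Finset.mem_filter, mem_F, Finset.mem_image]
    have h0 : [] ∈ A 0 := by simp [A_zero]
    constructor
    · rintro ⟨⟨i, j, s, t, h, hs, ht, rfl⟩, hI⟩
      rw [F_inv n i j s t h hs ht, not_not] at hI
      subst hI
      have hj : j = 0 := by
        rw [mem_A] at ht
        by_contra hc
        have := (ht.1.2 0).2 (by omega)
        simp at this
      subst hj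
      have : i = n := by omega
      subst this
      exact ⟨s, hs, rfl⟩
    · rintro ⟨s, hs, rfl⟩
      exact ⟨⟨n, 0, s, [], rfl, hs, h0, rfl⟩, by rw [F_inv n n 0 s [] rfl hs h0]; simp⟩
  rw [this, Finset.card_image_of_injective]
  intro s s' h
  simpa [F] using h

end Mot

/-- Corollary `Mot`. For every `n ≥ 1`, `|S_n(132, 21̂3)|` — the number of
permutations of length `n` avoiding `132` and the hatted pattern obtained from `213`
(0-indexed one-line notation `(1,0,2)`, i.e. `Equiv.swap 0 1`) by marking the entry `1`
(position `2`, 0-indexed index `1`) — equals the `(n−1)`-th Motzkin number. -/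
theorem stmt13 (n : ℕ) (hn : 1 ≤ n) :
    Nat.card {π : Equiv.Perm (Fin n) |
        Avoids132 π ∧ AvoidsHat (Equiv.swap (0 : Fin 3) 1) 1 π} = motzkin (n - 1) := by
  rw [Mot.card_perm]
  obtain ⟨m, rfl⟩ : ∃ m, n = m + 1 := ⟨n - 1, by omega⟩
  exact Mot.num (fun n => (Mot.A n).card) (fun n => (Mot.C n).card) (by simp [Mot.A_zero])
    (by simp [Mot.C_zero]) Mot.card_A Mot.card_AC m
end

section
/- Let π ∈ S_n. Then π avoids both 132 and the hatted pattern 21̂3 if and only if π avoids 132 and π contains no factor a(a+1), i.e., there is no index i with π_{i+1} = π_i + 1. -/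
/-- Three positions forming a `213` give an occurrence of `Equiv.swap 0 1`. -/
theorem isOcc_of_213 {n : ℕ} (π : Equiv.Perm (Fin n)) (a b c : Fin n) (hab : a < b) (hbc : b < c)
    (h1 : π b < π a) (h2 : π a < π c) : IsOcc (Equiv.swap (0 : Fin 3) 1) π ![a, b, c] := by
  have e0 : Equiv.swap (0 : Fin 3) 1 0 = 1 := by decide
  have e1 : Equiv.swap (0 : Fin 3) 1 1 = 0 := by decide
  have e2 : Equiv.swap (0 : Fin 3) 1 2 = 2 := by decide
  have hac := hab.trans hbc
  have h3 := h1.trans h2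
  constructor
  · intro x y hxy
    fin_cases x <;> fin_cases y <;> simp_all
  · intro x y
    fin_cases x <;> fin_cases y <;> simp [e0, e1, e2, h1, h2, h3, h1.le, h2.le, h3.le]

/-- Theorem `fac`, §4. A permutation `π ∈ S_n` avoids both `132` and the
hatted pattern `21̂3` (the pattern `213`, 0-indexed one-line notation `(1,0,2)` i.e.
`Equiv.swap 0 1`, with its entry `1` marked) if and only if `π` avoids `132` and contains no
factor `a(a+1)`, i.e. there is no index `i` with `π_{i+1} = π_i + 1`. -/
theorem stmt15 (n : ℕ) (π : Equiv.Perm (Fin n)) :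
    (Avoids132 π ∧ AvoidsHat (Equiv.swap (0 : Fin 3) 1) 1 π) ↔
    (Avoids132 π ∧ ¬ ∃ (i : ℕ) (h : i + 1 < n),
      (π ⟨i + 1, h⟩ : ℕ) = (π ⟨i, by omega⟩ : ℕ) + 1) := by
  refine and_congr_right fun hav => ⟨?_, ?_⟩
  · rintro H ⟨i, hi, hπ⟩
    have e0 : Equiv.swap (0 : Fin 3) 1 0 = 1 := by decide
    have e1 : Equiv.swap (0 : Fin 3) 1 1 = 0 := by decide
    have e2 : Equiv.swap (0 : Fin 3) 1 2 = 2 := by decide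
    have s0 : Fin.succAbove (1 : Fin 3) (0 : Fin 2) = 0 := by decide
    have s1 : Fin.succAbove (1 : Fin 3) (1 : Fin 2) = 2 := by decide
    have hlt : π ⟨i, by omega⟩ < π ⟨i + 1, hi⟩ := by rw [Fin.lt_def]; omega
    obtain ⟨h, ⟨hm, ho⟩, hr⟩ := H ![⟨i, by omega⟩, ⟨i + 1, hi⟩]
      (by
        intro x y hxy
        fin_cases x <;> fin_cases y <;> simp_all)
      (by
        intro x y
        fin_cases x <;> fin_cases y <;> simp [e0, e2, s0, s1, hlt, hlt.le])
    obtain ⟨x, hx⟩ := hr ⟨0, rfl⟩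
    obtain ⟨y, hy⟩ := hr ⟨1, rfl⟩
    simp only [Matrix.cons_val_zero, Matrix.cons_val_one] at hx hy
    have m01 : h 0 < h 1 := hm (by decide)
    have m12 : h 1 < h 2 := hm (by decide)
    have o10 : π (h 1) < π (h 0) := (ho 1 0).1 (by decide)
    have o02 : π (h 0) < π (h 2) := (ho 0 2).1 (by decide)
    have hxv := congrArg Fin.val hx
    have hyv := congrArg Fin.val hy
    rw [← hx, ← hy] at hπ
    simp only [Fin.lt_def] at m01 m12 o10 o02
    fin_cases x <;> fin_cases y <;> simp at hxv hyv hπ <;> omega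
  · intro hf g hg ho
    have hpq : g 0 < g 1 := hg (by decide)
    have hv : π (g 0) < π (g 1) := (ho 0 1).1 (by decide)
    generalize hp : g 0 = p at *
    generalize hq : g 1 = q at *
    have hrange : ∀ h : Fin 3 → Fin n, (∃ x, h x = p) → (∃ x, h x = q) →
        Set.range g ⊆ Set.range h := by
      rintro h h1 h2 _ ⟨x, rfl⟩
      fin_cases x
      · simpa [hp] using h1
      · simpa [hq] using h2
    have hr' : (p : ℕ) + 1 < n := by have := q.2; rw [Fin.lt_def] at hpq; omega
    have hs' : (π p : ℕ) + 1 < n := by have := (π q).2; rw [Fin.lt_def] at hv; omega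
    obtain ⟨s, hs⟩ := π.surjective ⟨(π p : ℕ) + 1, hs'⟩
    have hsv : (π s : ℕ) = π p + 1 := congrArg Fin.val hs
    obtain ⟨r, hr⟩ : ∃ r : Fin n, r = ⟨(p : ℕ) + 1, hr'⟩ := ⟨_, rfl⟩
    have hrv : (r : ℕ) = p + 1 := congrArg Fin.val hr
    have hne : (π r : ℕ) ≠ π p + 1 := fun h => hf ⟨p, hr', by rw [← hr]; exact h⟩
    have hrp : (π r : ℕ) ≠ π p := fun h => by
      have := congrArg Fin.val (π.injective (Fin.ext h)); omega
    have hsp : s ≠ p := fun h => by rw [h] at hsv; omega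
    have hsr : s ≠ r := fun h => by rw [h] at hsv; omega
    have hsp' : (s : ℕ) ≠ p := fun h => hsp (Fin.ext h)
    have hsr' : (s : ℕ) ≠ r := fun h => hsr (Fin.ext h)
    rw [Fin.lt_def] at hpq hv
    rcases lt_or_gt_of_ne hsp' with hlt | hgt
    · have hsq : (π s : ℕ) ≠ π q := fun h => by
        have := congrArg Fin.val (π.injective (Fin.ext h)); omega
      exact ⟨![s, p, q], isOcc_of_213 π s p q hlt hpq (by rw [Fin.lt_def]; omega)
        (by rw [Fin.lt_def]; omega), hrange _ ⟨1, rfl⟩ ⟨2, rfl⟩⟩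
    · rcases lt_or_gt_of_ne hrp with h1 | h1
      · have hrq : (r : ℕ) ≠ q := fun h => by
          rw [Fin.ext h] at h1; omega
        exact ⟨![p, r, q], isOcc_of_213 π p r q (by rw [Fin.lt_def]; omega)
          (by rw [Fin.lt_def]; omega) h1 hv, hrange _ ⟨0, rfl⟩ ⟨2, rfl⟩⟩
      · exact absurd ⟨p, r, s, by rw [Fin.lt_def]; omega, by rw [Fin.lt_def]; omega,
          by rw [Fin.lt_def]; omega, by rw [Fin.lt_def]; omega⟩ hav
end

section
/- Let π ∈ S_n be a permutation each of whose LTRM blocks is increasing (equivalently, π has a geometric representation). Call a pair (π_i, π_{i+1}) an arc of π if π_i and π_{i+1} lie in the same LTRM block (so π_i < π_{i+1}). Then π avoids the pattern 132 if and only if no two arcs of π cross, i.e., there are no two arcs (a, b) and (c, d) with a < c < b < d. -/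
/-- Lemma `132`. Let `π ∈ S_n` be such that each of its LTRM blocks is
increasing, i.e. `π_i < π_{i+1}` whenever `π_{i+1}` is not a left-to-right minimum (this is the
hypothesis that `π` has a geometric representation; the arcs are exactly the pairs
`(π_i, π_{i+1})` with `π_{i+1}` not an LTR minimum). Then `π` avoids `132` if and only if no two
arcs `(a, b)`, `(c, d)` of `π` cross, i.e. there are no two arcs with `a < c < b < d`. -/
theorem stmt16 (n : ℕ) (π : Equiv.Perm (Fin n))
    (hblocks : ∀ (i : ℕ) (h : i + 1 < n),
      ¬ IsLTRMin π ⟨i + 1, h⟩ → π ⟨i, by omega⟩ < π ⟨i + 1, h⟩) :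
    Avoids132 π ↔
      ¬ ∃ (i j : ℕ) (hi : i + 1 < n) (hj : j + 1 < n),
        ¬ IsLTRMin π ⟨i + 1, hi⟩ ∧ ¬ IsLTRMin π ⟨j + 1, hj⟩ ∧
        π ⟨i, by omega⟩ < π ⟨j, by omega⟩ ∧ π ⟨j, by omega⟩ < π ⟨i + 1, hi⟩ ∧
        π ⟨i + 1, hi⟩ < π ⟨j + 1, hj⟩ := by
  constructor
  · rintro hav ⟨i, j, hi, hj, -, -, h1, h2, h3⟩
    rcases lt_trichotomy i j with hij | hij | hij
    · have hne : i + 1 ≠ j := by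
        rintro rfl
        exact lt_irrefl _ h2
      exact hav ⟨⟨i, by omega⟩, ⟨i + 1, hi⟩, ⟨j, by omega⟩, Fin.mk_lt_mk.2 (by omega),
        Fin.mk_lt_mk.2 (by omega), h1, h2⟩
    · subst hij
      exact lt_irrefl _ h1
    · exact hav ⟨⟨j, by omega⟩, ⟨j + 1, hj⟩, ⟨i + 1, hi⟩, Fin.mk_lt_mk.2 (by omega),
        Fin.mk_lt_mk.2 (by omega), h2, h3⟩
  · rintro hcr ⟨⟨a, ha⟩, ⟨b, hb⟩, ⟨c, hc⟩, hab, hbc, hac, hcb⟩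
    rw [Fin.mk_lt_mk] at hab hbc
    classical
    -- an arc `(π_i, π_{i+1})` before `c` straddling `π_c`
    have hex : ∃ b, ∃ hb : b < n, a < b ∧ b < c ∧ π ⟨c, hc⟩ < π ⟨b, hb⟩ :=
      ⟨b, hb, hab, hbc, hcb⟩
    obtain ⟨hb', hab', hbc', hcb'⟩ := Nat.find_spec hex
    have hmin := fun m => Nat.find_min (H := hex) (m := m)
    generalize Nat.find hex = b' at *
    obtain ⟨i, rfl⟩ : ∃ i, b' = i + 1 := ⟨b' - 1, by omega⟩
    have hic : π ⟨i, by omega⟩ < π ⟨c, hc⟩ := by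
      rcases Nat.lt_or_ge a i with h | h
      · have h1 := hmin i (by omega)
        have h2 : π ⟨i, by omega⟩ ≤ π ⟨c, hc⟩ := by
          by_contra h3
          exact h1 ⟨by omega, h, by omega, not_le.1 h3⟩
        refine lt_of_le_of_ne h2 fun h3 => ?_
        have := Fin.mk.inj (π.injective h3)
        omega
      · obtain rfl : a = i := by omega
        exact hac
    -- the first later entry with value strictly inside this arc
    have hex2 : ∃ c, ∃ hc : c < n, i + 1 < c ∧ π ⟨i, by omega⟩ < π ⟨c, hc⟩ ∧
        π ⟨c, hc⟩ < π ⟨i + 1, hb'⟩ := ⟨c, hc, hbc', hic, hcb'⟩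
    obtain ⟨hd, hid, h1, h2⟩ := Nat.find_spec hex2
    have hmin2 := fun m => Nat.find_min (H := hex2) (m := m)
    generalize Nat.find hex2 = d at *
    obtain ⟨j, rfl⟩ : ∃ j, d = j + 1 := ⟨d - 1, by omega⟩
    have hnj : ¬ IsLTRMin π ⟨j + 1, hd⟩ := fun h =>
      lt_asymm h1 (h ⟨i, by omega⟩ (Fin.mk_lt_mk.2 (by omega)))
    have hni : ¬ IsLTRMin π ⟨i + 1, hb'⟩ := fun h =>
      lt_asymm (hic.trans hcb') (h ⟨i, by omega⟩ (Fin.mk_lt_mk.2 (by omega)))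
    have hj := hblocks j hd hnj
    have hne : j ≠ i + 1 := by
      rintro rfl
      exact lt_asymm hj h2
    have hle : π ⟨j, by omega⟩ ≤ π ⟨i, by omega⟩ := by
      by_contra h3
      exact hmin2 j (by omega) ⟨by omega, by omega, not_le.1 h3, hj.trans h2⟩
    refine hcr ⟨j, i, hd, hb', hnj, hni, lt_of_le_of_ne hle fun h3 => ?_, h1, h2⟩
    have := Fin.mk.inj (π.injective h3)
    omega
end
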